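/- arXiv:1812.09564 — 5 statements merged into one kernel-verified Lean document; each statement's English description precedes it below -/
import Mathlib

section
/- For every natural number n ≥ 6 and every ε > 0, there exist positive constants c, C_ε such that for all sufficiently large B: c · B (log B)^(n(n−1)/2 − 1) ≤ N_n(B) and N_n(B) ≤ C_ε · B^(n/2 − 7/6 + ε). -/
/-- `f n r` is the number of subrings of `ℤ^n` (with identity `(1,…,1)`) of index `r`. -/
noncomputable def subringCount (n r : ℕ) : ℕ :=
  Nat.card {R : Subring (Fin n → ℤ) // R.toAddSubgroup.index = r}

/-- `N n B = ∑_{r ≤ B} f n r`. -/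
noncomputable def subringCountUpTo (n B : ℕ) : ℕ :=
  ∑ r ∈ Finset.Icc 1 B, subringCount n r



/-- cost of the first row -/
def rowCost : ℕ → List ℕ → ℕ
  | 0, _ => 0
  | _, [] => 0
  | k, (m :: l) => min k (m / 2) + (l.map (· / 2)).sum

def latCost : List ℕ → ℕ
  | [] => 0
  | k :: l => rowCost k l + latCost l

lemma sum_half_le (l : List ℕ) : 2 * (l.map (· / 2)).sum ≤ l.sum := by
  induction l with
  | nil => simp
  | cons k l ih => simp only [List.map_cons, List.sum_cons]; omega

lemma rowCost_le (k : ℕ) (l : List ℕ) : 2 * rowCost k l ≤ l.sum := by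
  cases k with
  | zero => simp [rowCost]
  | succ k =>
    cases l with
    | nil => simp [rowCost]
    | cons m l =>
      have := sum_half_le l
      simp only [rowCost, List.sum_cons]; omega

lemma latCost_small (l : List ℕ) : 4 * latCost l ≤ l.sum * (l.sum - 1) := by
  induction l with
  | nil => simp [latCost]
  | cons k l ih =>
    rcases Nat.eq_zero_or_pos k with rfl | hk
    · simpa [latCost, rowCost] using ih
    · have h := rowCost_le k l
      simp only [latCost, List.sum_cons]
      generalize l.sum = s at *
      have h1 : (k + s) * (k + s - 1) ≥ (s + 1) * s := Nat.mul_le_mul (by omega) (by omega)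
      have h2 : s * (s - 1) + 2 * s = (s + 1) * s := by
        cases s with
        | zero => simp
        | succ s => simp; ring
      omega

lemma latCost_four (a b c d : ℕ) : 6 * latCost [a, b, c, d] ≤ 7 * (a + b + c + d) := by
  have h1 : rowCost a [b, c, d] ≤ min a (b / 2) + (c / 2 + d / 2) := by
    cases a <;> simp [rowCost]
  have h2 : rowCost b [c, d] ≤ min b (c / 2) + (d / 2) := by
    cases b <;> simp [rowCost]
  have h3 : rowCost c [d] ≤ min c (d / 2) := by
    cases c <;> simp [rowCost]
  have h4 : rowCost d [] = 0 := by
    cases d <;> simp [rowCost]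
  simp only [latCost, h4]
  omega

lemma latCost_big (m : ℕ) : ∀ l : List ℕ, l.length = m + 4 → 6 * latCost l ≤ (3 * m + 7) * l.sum := by
  induction m with
  | zero =>
    intro l hl
    match l, hl with
    | [a, b, c, d], _ =>
      have := latCost_four a b c d
      simpa [add_assoc] using this
  | succ m ih =>
    intro l hl
    match l, hl with
    | k :: l, hl =>
      have h1 := ih l (by simp at hl; omega)
      have h2 := rowCost_le k l
      simp only [latCost, List.sum_cons]
      nlinarith [Nat.zero_le k, Nat.zero_le (m * k)]

lemma latCost_main (l : List ℕ) (hd : 5 ≤ l.length) (hs : 1 ≤ l.sum) :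
    6 * latCost l + 6 ≤ (3 * l.length - 4) * l.sum := by
  obtain ⟨m, hm⟩ := Nat.exists_eq_add_of_le hd
  have h1 := latCost_big (m + 1) l (by omega)
  have h2 := latCost_small l
  have h3 : 3 * l.length - 4 = 3 * m + 11 := by omega
  rw [h3]
  generalize l.sum = s at *
  rcases le_or_gt 6 s with h | h
  · nlinarith
  · interval_cases s <;> omega

/-- quadratic roots -/
lemma pow_dvd_mul_split {p : ℕ} (hp : p.Prime) (k : ℕ) (u v : ℤ) (h : (p : ℤ) ^ k ∣ u * v) :
    ∃ i j, i + j = k ∧ (p : ℤ) ^ i ∣ u ∧ (p : ℤ) ^ j ∣ v := by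
  obtain ⟨x, y, hx, hy, hxy⟩ := exists_dvd_and_dvd_of_dvd_mul h
  have hP := Nat.prime_iff_prime_int.mp hp
  have hx' : x ∣ (p : ℤ) ^ k := ⟨y, hxy⟩
  have hy' : y ∣ (p : ℤ) ^ k := ⟨x, by rw [hxy]; ring⟩
  obtain ⟨i, hi, hxi⟩ := (dvd_prime_pow hP _).mp hx'
  obtain ⟨j, hj, hyj⟩ := (dvd_prime_pow hP _).mp hy'
  refine ⟨i, j, ?_, hxi.symm.dvd.trans hx, hyj.symm.dvd.trans hy⟩
  have h1 : Associated ((p : ℤ) ^ k) ((p : ℤ) ^ (i + j)) := by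
    rw [hxy, pow_add]; exact hxi.mul_mul hyj
  have h2 := Int.associated_iff_natAbs.mp h1
  simp only [Int.natAbs_pow, Int.natAbs_natCast] at h2
  exact (Nat.pow_right_injective hp.two_le h2).symm

/-- cover of two residue classes -/
lemma cover_classes {p : ℕ} (hp : p.Prime) (k e : ℕ) (he : e ≤ k) (x y : ℤ) :
    ∃ T : Finset ℤ, T.card ≤ 2 * p ^ e ∧
      ∀ c : ℤ, ((p : ℤ) ^ (k - e) ∣ c - x ∨ (p : ℤ) ^ (k - e) ∣ c - y) → ∃ c' ∈ T, (p : ℤ) ^ k ∣ c - c' := by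
  classical
  have key : ∀ x c : ℤ, (p : ℤ) ^ (k - e) ∣ c - x →
      ∃ c' ∈ (Finset.range (p ^ e)).image (fun t : ℕ => x + (p : ℤ) ^ (k - e) * t), (p : ℤ) ^ k ∣ c - c' := by
    rintro x c ⟨t, ht⟩
    have hpos : (0 : ℤ) < (p : ℤ) ^ e := by have := hp.pos; positivity
    have h0 := Int.emod_nonneg t hpos.ne'
    have h1 := Int.emod_lt_of_pos t hpos
    refine ⟨x + (p : ℤ) ^ (k - e) * (t % (p : ℤ) ^ e), ?_, ?_⟩
    · refine Finset.mem_image.mpr ⟨(t % (p : ℤ) ^ e).toNat, ?_, ?_⟩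
      · rw [Finset.mem_range]; zify; rw [Int.toNat_of_nonneg h0]; exact_mod_cast h1
      · rw [Int.toNat_of_nonneg h0]
    · refine ⟨t / (p : ℤ) ^ e, ?_⟩
      have h2 := Int.emod_add_mul_ediv t ((p : ℤ) ^ e)
      have h3 : (p : ℤ) ^ k = (p : ℤ) ^ (k - e) * (p : ℤ) ^ e := by rw [← pow_add]; congr 1; omega
      rw [h3]
      linear_combination ht - (p : ℤ) ^ (k - e) * h2
  refine ⟨(Finset.range (p ^ e)).image (fun t : ℕ => x + (p : ℤ) ^ (k - e) * t) ∪
    (Finset.range (p ^ e)).image (fun t : ℕ => y + (p : ℤ) ^ (k - e) * t), ?_, ?_⟩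
  · refine (Finset.card_union_le _ _).trans ?_
    have h1 := Finset.card_image_le (s := Finset.range (p ^ e)) (f := fun t : ℕ => x + (p : ℤ) ^ (k - e) * t)
    have h2 := Finset.card_image_le (s := Finset.range (p ^ e)) (f := fun t : ℕ => y + (p : ℤ) ^ (k - e) * t)
    simp only [Finset.card_range] at h1 h2
    omega
  · rintro c (h | h)
    · obtain ⟨c', h1, h2⟩ := key x c h
      exact ⟨c', Finset.mem_union_left _ h1, h2⟩
    · obtain ⟨c', h1, h2⟩ := key y c h
      exact ⟨c', Finset.mem_union_right _ h1, h2⟩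

lemma quad_roots {p : ℕ} (hp : p.Prime) (k : ℕ) (a q : ℤ) :
    ∃ T : Finset ℤ, T.card ≤ 2 * p ^ (k / 2) ∧
      ∀ c : ℤ, (p : ℤ) ^ k ∣ c * c - a * c - q → ∃ c' ∈ T, (p : ℤ) ^ k ∣ c - c' := by
  by_cases hex : ∃ x : ℤ, (p : ℤ) ^ k ∣ x * x - a * x - q
  · obtain ⟨x, hx⟩ := hex
    obtain ⟨T, hT, h⟩ := cover_classes hp k (k / 2) (by omega) x (a - x)
    refine ⟨T, hT, fun c hc => h c ?_⟩
    have h1 : (p : ℤ) ^ k ∣ (c - x) * (c - (a - x)) := by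
      have e : (c - x) * (c - (a - x)) = (c * c - a * c - q) - (x * x - a * x - q) := by ring
      rw [e]; exact dvd_sub hc hx
    obtain ⟨i, j, hij, hi, hj⟩ := pow_dvd_mul_split hp k _ _ h1
    rcases le_or_gt (k - k / 2) i with h2 | h2
    · exact Or.inl ((pow_dvd_pow _ h2).trans hi)
    · exact Or.inr ((pow_dvd_pow _ (by omega)).trans hj)
  · exact ⟨∅, by simp, fun c hc => (hex ⟨c, hc⟩).elim⟩

lemma quad_roots_zero {p : ℕ} (hp : p.Prime) (k m : ℕ) :
    ∃ T : Finset ℤ, T.card ≤ 2 * p ^ (min m (k / 2)) ∧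
      ∀ c : ℤ, (p : ℤ) ^ k ∣ c * c - (p : ℤ) ^ m * c → ∃ c' ∈ T, (p : ℤ) ^ k ∣ c - c' := by
  rcases le_or_gt (k / 2) m with hm | hm
  · rw [min_eq_right hm]
    obtain ⟨T, hT, h⟩ := quad_roots hp k ((p : ℤ) ^ m) 0
    exact ⟨T, hT, fun c hc => h c (by simpa using hc)⟩
  · rw [min_eq_left hm.le]
    obtain ⟨T, hT, h⟩ := cover_classes hp k m (by omega) 0 ((p : ℤ) ^ m)
    refine ⟨T, hT, fun c hc => h c ?_⟩
    have h1 : (p : ℤ) ^ k ∣ (c - 0) * (c - (p : ℤ) ^ m) := by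
      have e : (c - 0) * (c - (p : ℤ) ^ m) = c * c - (p : ℤ) ^ m * c := by ring
      rw [e]; exact hc
    obtain ⟨i, j, hij, hi, hj⟩ := pow_dvd_mul_split hp k _ _ h1
    rcases le_or_gt (k - m) i with h2 | h2
    · exact Or.inl ((pow_dvd_pow _ h2).trans hi)
    rcases le_or_gt (k - m) j with h3 | h3
    · exact Or.inr ((pow_dvd_pow _ h3).trans hj)
    exfalso
    have h4 : (p : ℤ) ^ (m + 1) ∣ (p : ℤ) ^ m := by
      have := dvd_sub ((pow_dvd_pow (p : ℤ) (show m + 1 ≤ i by omega)).trans hi)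
        ((pow_dvd_pow (p : ℤ) (show m + 1 ≤ j by omega)).trans hj)
      have e : (p : ℤ) ^ m = (c - 0) - (c - (p : ℤ) ^ m) := by ring
      rw [e]; exact this
    have h5 : p ^ (m + 1) ∣ p ^ m := by exact_mod_cast h4
    have := (Nat.pow_dvd_pow_iff_le_right hp.one_lt).mp h5
    omega


def consZero (d : ℕ) : (Fin d → ℤ) →+ (Fin (d + 1) → ℤ) where
  toFun y := Fin.cons 0 y
  map_zero' := by ext i; refine Fin.cases ?_ (fun i => ?_) i <;> simp
  map_add' x y := by ext i; refine Fin.cases ?_ (fun i => ?_) i <;> simp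

def tailSub {d : ℕ} (L : AddSubgroup (Fin (d + 1) → ℤ)) : AddSubgroup (Fin d → ℤ) :=
  L.comap (consZero d)

lemma mem_tailSub {d : ℕ} (L : AddSubgroup (Fin (d + 1) → ℤ)) (y : Fin d → ℤ) :
    y ∈ tailSub L ↔ (Fin.cons 0 y : Fin (d + 1) → ℤ) ∈ L := Iff.rfl

lemma tail_mem_tailSub {d : ℕ} {L : AddSubgroup (Fin (d + 1) → ℤ)} {z : Fin (d + 1) → ℤ}
    (hz : z ∈ L) (h0 : z 0 = 0) : Fin.tail z ∈ tailSub L := by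
  rw [mem_tailSub, ← h0, Fin.cons_self_tail]; exact hz

def MulClosed {d : ℕ} (L : AddSubgroup (Fin d → ℤ)) : Prop := ∀ x ∈ L, ∀ y ∈ L, x * y ∈ L

def Stab {d : ℕ} (L : AddSubgroup (Fin d → ℤ)) (x : Fin d → ℤ) : Prop := ∀ y ∈ L, x * y ∈ L

lemma cons_zero_mul {d : ℕ} (x : Fin (d + 1) → ℤ) (y : Fin d → ℤ) :
    x * (Fin.cons 0 y : Fin (d + 1) → ℤ) = Fin.cons 0 (Fin.tail x * y) := by
  ext i; refine Fin.cases ?_ (fun i => ?_) i <;> simp [Fin.tail]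

lemma Stab.tail {d : ℕ} {L : AddSubgroup (Fin (d + 1) → ℤ)} {x : Fin (d + 1) → ℤ} (h : Stab L x) :
    Stab (tailSub L) (Fin.tail x) := by
  intro y hy
  rw [mem_tailSub] at hy ⊢
  rw [← cons_zero_mul]; exact h _ hy

lemma MulClosed.tail {d : ℕ} {L : AddSubgroup (Fin (d + 1) → ℤ)} (h : MulClosed L) :
    MulClosed (tailSub L) := by
  intro x hx y hy
  rw [mem_tailSub] at hx hy ⊢
  have := h _ hx _ hy
  rw [cons_zero_mul] at this
  simpa using this

def HasDiag (p : ℕ) : (d : ℕ) → (Fin d → ℕ) → AddSubgroup (Fin d → ℤ) → Prop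
  | 0, _, _ => True
  | d + 1, κ, L => (∀ t : ℤ, (∃ x ∈ L, x 0 = t) ↔ (p : ℤ) ^ κ 0 ∣ t) ∧
      HasDiag p d (Fin.tail κ) (tailSub L)

def Covers {d : ℕ} (L : AddSubgroup (Fin d → ℤ)) (a : ℤ) (q : Fin d → ℤ) (X : Finset (Fin d → ℤ)) : Prop :=
  ∀ x, Stab L x → x * x - a • x - q ∈ L → ∃ x' ∈ X, x - x' ∈ L

lemma cover_step {d : ℕ} (L : AddSubgroup (Fin (d + 1) → ℤ)) (hL : MulClosed L) (b a : ℤ)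
    (q : Fin (d + 1) → ℤ) (hb : ∀ t : ℤ, (∃ x ∈ L, x 0 = t) ↔ b ∣ t) (T : Finset ℤ)
    (hT : ∀ c : ℤ, b ∣ c * c - a * c - q 0 → ∃ c' ∈ T, b ∣ c - c') (K : ℕ)
    (hK : ∀ q', ∃ X : Finset (Fin d → ℤ), X.card ≤ K ∧ Covers (tailSub L) a q' X) :
    ∃ X : Finset (Fin (d + 1) → ℤ), X.card ≤ T.card * K ∧ Covers L a q X := by
  classical
  obtain ⟨w, hw, hw0⟩ := (hb b).mpr dvd_rfl
  choose X' hX'c hX' using hK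
  let s : ℤ → ℤ := fun c => (c * c - a * c - q 0) / b
  let q' : ℤ → Fin d → ℤ := fun c => Fin.tail q + s c • Fin.tail w
  refine ⟨T.biUnion fun c => (X' (q' c)).image (fun y => (Fin.cons c y : Fin (d + 1) → ℤ)),
    Finset.card_biUnion_le_card_mul _ _ _ fun c _ => Finset.card_image_le.trans (hX'c _), ?_⟩
  intro x hx hxL
  have hroot : b ∣ x 0 * x 0 - a * x 0 - q 0 := (hb _).mp ⟨_, hxL, by simp⟩
  obtain ⟨c, hcT, t, ht⟩ := hT _ hroot
  set z := x - t • w with hz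
  have hz0 : z 0 = c := by simp [hz, hw0]; linarith
  have hzS : Stab L z := by
    intro y hy
    have : z * y = x * y - t • (w * y) := by ext i; simp [hz]; ring
    rw [this]
    exact L.sub_mem (hx y hy) (L.zsmul_mem (hL _ hw _ hy) _)
  have hzL : z * z - a • z - q ∈ L := by
    have : z * z - a • z - q = (x * x - a • x - q) - (2 * t) • (x * w) + (t * t) • (w * w) + (a * t) • w := by
      ext i; simp [hz]; ring
    rw [this]
    exact L.add_mem (L.add_mem (L.sub_mem hxL (L.zsmul_mem (hx _ hw) _)) (L.zsmul_mem (hL _ hw _ hw) _))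
      (L.zsmul_mem hw _)
  have hdiv : b ∣ c * c - a * c - q 0 := (hb _).mp ⟨_, hzL, by simp [hz0]⟩
  have hs : b * s c = c * c - a * c - q 0 := Int.mul_ediv_cancel' hdiv
  have hu := L.sub_mem hzL (L.zsmul_mem hw (s c))
  have hu' := tail_mem_tailSub hu (by simp [hz0, hw0]; linarith)
  have e : Fin.tail (z * z - a • z - q - s c • w) = Fin.tail z * Fin.tail z - a • Fin.tail z - q' c := by
    ext i; simp [Fin.tail, q']; ring
  rw [e] at hu'
  obtain ⟨y, hy, hyL⟩ := hX' (q' c) _ hzS.tail hu'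
  refine ⟨Fin.cons c y, Finset.mem_biUnion.mpr ⟨c, hcT, Finset.mem_image_of_mem _ hy⟩, ?_⟩
  have e2 : x - (Fin.cons c y : Fin (d + 1) → ℤ) = t • w + (Fin.cons 0 (Fin.tail z - y) : Fin (d + 1) → ℤ) := by
    ext i
    refine Fin.cases ?_ (fun i => ?_) i
    · simp [hw0]; linarith
    · simp [Fin.tail, hz]; ring
  rw [e2]
  exact L.add_mem (L.zsmul_mem hw _) hyL

lemma cover_general {p : ℕ} (hp : p.Prime) (d : ℕ) : ∀ (κ : Fin d → ℕ) (L : AddSubgroup (Fin d → ℤ)),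
    MulClosed L → HasDiag p d κ L → ∀ (a : ℤ) (q : Fin d → ℤ),
    ∃ X : Finset (Fin d → ℤ), X.card ≤ 2 ^ d * p ^ ((List.ofFn κ).map (· / 2)).sum ∧ Covers L a q X := by
  induction d with
  | zero =>
    intro κ L _ _ a q
    refine ⟨{0}, by simp, fun x _ _ => ⟨0, by simp, ?_⟩⟩
    rw [Subsingleton.elim (x - 0) 0]; exact L.zero_mem
  | succ d ih =>
    intro κ L hL hD a q
    obtain ⟨T, hTc, hT⟩ := quad_roots hp (κ 0) a (q 0)
    obtain ⟨X, hXc, hX⟩ := cover_step L hL _ a q hD.1 T hT _ (ih (Fin.tail κ) (tailSub L) hL.tail hD.2 a)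
    refine ⟨X, hXc.trans ((Nat.mul_le_mul_right _ hTc).trans (le_of_eq ?_)), hX⟩
    rw [List.ofFn_succ]
    simp only [List.map_cons, List.sum_cons, Fin.tail_def]
    ring

lemma cover_idem {p : ℕ} (hp : p.Prime) (d M : ℕ) (L : AddSubgroup (Fin d → ℤ))
    (hM : ∀ x : Fin d → ℤ, ((p : ℤ) ^ M) • x ∈ L) :
    ∃ X : Finset (Fin d → ℤ), X.card ≤ 2 ^ d ∧ Covers L 1 0 X := by
  classical
  refine ⟨Fintype.piFinset (fun _ => {0, 1}), by simp, ?_⟩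
  intro x hx hxL
  have hxL' : x * x - x ∈ L := by simpa using hxL
  have hpow : ∀ N : ℕ, x ^ (N + 1) - x ∈ L := by
    intro N
    induction N with
    | zero => simp
    | succ N ih =>
      have e : x ^ (N + 1 + 1) - x = x * (x ^ (N + 1) - x) + (x * x - x) := by ring
      rw [e]; exact L.add_mem (hx _ ih) hxL'
  have hM1 : ∀ i, ∃ y ∈ ({0, 1} : Finset ℤ), (p : ℤ) ^ M ∣ x i ^ (M * Nat.totient (p ^ M) + (Nat.totient (p ^ M))) - y := by
    intro i
    by_cases hpx : (p : ℤ) ∣ x i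
    · refine ⟨0, by simp, ?_⟩
      have : 1 ≤ Nat.totient (p ^ M) := Nat.totient_pos.mpr (by have := hp.pos; positivity)
      rw [sub_zero]
      exact (pow_dvd_pow_of_dvd hpx M).trans (pow_dvd_pow _ (by nlinarith))
    · refine ⟨1, by simp, ?_⟩
      have hc : IsCoprime (x i) ((p : ℤ) ^ M) := by
        apply IsCoprime.pow_right
        exact ((Nat.prime_iff_prime_int.mp hp).coprime_iff_not_dvd.mpr hpx).symm
      have hc' : IsCoprime (x i) ((p ^ M : ℕ) : ℤ) := by push_cast; exact hc
      have h1 : x i ^ Nat.totient (p ^ M) ≡ 1 [ZMOD (p ^ M : ℕ)] := by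
        rw [← ZMod.intCast_eq_intCast_iff]
        have h4 := hc'.map (Int.castRingHom (ZMod (p ^ M)))
        have h5 : ((Int.castRingHom (ZMod (p ^ M))) ((p ^ M : ℕ) : ℤ)) = 0 := by
          rw [map_natCast, ZMod.natCast_self]
        rw [h5, isCoprime_zero_right] at h4
        obtain ⟨u, hu⟩ := h4
        have h6 := ZMod.pow_totient u
        have h7 := congrArg Units.val h6
        rw [Units.val_pow_eq_pow_val, hu] at h7
        simpa using h7
      have h2 := h1.pow (M + 1)
      rw [one_pow, ← pow_mul] at h2
      have h3 := h2.symm.dvd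
      push_cast at h3
      rw [show M * Nat.totient (p ^ M) + (Nat.totient (p ^ M)) = Nat.totient (p ^ M) * (M + 1) by ring]
      exact h3
  choose y hy hyd using hM1
  choose u hu using hyd
  refine ⟨y, by rw [Fintype.mem_piFinset]; exact hy, ?_⟩
  obtain ⟨N, hN⟩ : ∃ N, M * Nat.totient (p ^ M) + (Nat.totient (p ^ M)) = N + 1 :=
    Nat.exists_eq_succ_of_ne_zero (by
      have : 1 ≤ Nat.totient (p ^ M) := Nat.totient_pos.mpr (by have := hp.pos; positivity)
      omega)
  rw [hN] at hu
  have e : x - y = ((p : ℤ) ^ M) • u - (x ^ (N + 1) - x) := by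
    ext i
    have := hu i
    simp
    linarith
  rw [e]
  exact L.sub_mem (hM u) (hpow N)

lemma cover_main {p : ℕ} (hp : p.Prime) (d k : ℕ) (κ : Fin d → ℕ) (L : AddSubgroup (Fin d → ℤ))
    (hL : MulClosed L) (hD : HasDiag p d κ L) (M : ℕ) (hM : ∀ x : Fin d → ℤ, ((p : ℤ) ^ M) • x ∈ L) :
    ∃ X : Finset (Fin d → ℤ), X.card ≤ 2 ^ d * p ^ (rowCost k (List.ofFn κ)) ∧ Covers L ((p : ℤ) ^ k) 0 X := by
  cases k with
  | zero =>
    obtain ⟨X, h1, h2⟩ := cover_idem hp d M L hM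
    exact ⟨X, by simpa [rowCost] using h1, by simpa using h2⟩
  | succ k =>
    cases d with
    | zero =>
      refine ⟨{0}, by simp [rowCost], fun x _ _ => ⟨0, by simp, ?_⟩⟩
      rw [Subsingleton.elim (x - 0) 0]; exact L.zero_mem
    | succ d =>
      obtain ⟨T, hTc, hT⟩ := quad_roots_zero hp (κ 0) (k + 1)
      obtain ⟨X, hXc, hX⟩ := cover_step L hL _ ((p : ℤ) ^ (k + 1)) 0 hD.1 T (by simpa using hT) _
        (cover_general hp d (Fin.tail κ) (tailSub L) hL.tail hD.2 _)
      refine ⟨X, hXc.trans ((Nat.mul_le_mul_right _ hTc).trans (le_of_eq ?_)), hX⟩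
      rw [List.ofFn_succ]
      simp only [rowCost, Fin.tail_def]
      ring

def extSub {d : ℕ} (L' : AddSubgroup (Fin d → ℤ)) (a : ℤ) (x : Fin d → ℤ) : AddSubgroup (Fin (d + 1) → ℤ) where
  carrier := {z | ∃ t : ℤ, z 0 = t * a ∧ Fin.tail z - t • x ∈ L'}
  zero_mem' := ⟨0, by simp, by
    have : Fin.tail (0 : Fin (d + 1) → ℤ) - (0 : ℤ) • x = 0 := by ext i; simp [Fin.tail]
    rw [this]; exact L'.zero_mem⟩
  add_mem' := by
    rintro z w ⟨t, h1, h2⟩ ⟨u, h3, h4⟩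
    refine ⟨t + u, by simp [h1, h3]; ring, ?_⟩
    have : Fin.tail (z + w) - (t + u) • x = (Fin.tail z - t • x) + (Fin.tail w - u • x) := by
      ext i; simp [Fin.tail]; ring
    rw [this]; exact L'.add_mem h2 h4
  neg_mem' := by
    rintro z ⟨t, h1, h2⟩
    refine ⟨-t, by simp [h1], ?_⟩
    have : Fin.tail (-z) - (-t) • x = -(Fin.tail z - t • x) := by
      ext i; simp [Fin.tail]; ring
    rw [this]; exact L'.neg_mem h2

lemma eq_extSub {d : ℕ} (L : AddSubgroup (Fin (d + 1) → ℤ)) (a : ℤ)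
    (ha : ∀ t : ℤ, (∃ x ∈ L, x 0 = t) ↔ a ∣ t) (w : Fin (d + 1) → ℤ) (hw : w ∈ L) (hw0 : w 0 = a)
    (x : Fin d → ℤ) (hx : Fin.tail w - x ∈ tailSub L) : L = extSub (tailSub L) a x := by
  ext z
  constructor
  · intro hz
    obtain ⟨t, ht⟩ := (ha _).mp ⟨z, hz, rfl⟩
    refine ⟨t, by rw [ht]; ring, ?_⟩
    have h1 := tail_mem_tailSub (L.sub_mem hz (L.zsmul_mem hw t)) (by simp [ht, hw0]; ring)
    have : Fin.tail z - t • x = Fin.tail (z - t • w) + t • (Fin.tail w - x) := by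
      ext i; simp [Fin.tail]; ring
    rw [this]
    exact AddSubgroup.add_mem _ h1 (AddSubgroup.zsmul_mem _ hx _)
  · rintro ⟨t, h1, h2⟩
    have h3 : Fin.tail (z - t • w) ∈ tailSub L := by
      have : Fin.tail (z - t • w) = (Fin.tail z - t • x) - t • (Fin.tail w - x) := by
        ext i; simp [Fin.tail]; ring
      rw [this]
      exact AddSubgroup.sub_mem _ h2 (AddSubgroup.zsmul_mem _ hx _)
    rw [mem_tailSub] at h3
    have : z = (Fin.cons 0 (Fin.tail (z - t • w)) : Fin (d + 1) → ℤ) + t • w := by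
      ext i
      refine Fin.cases ?_ (fun i => ?_) i
      · simp [h1, hw0]
      · simp [Fin.tail]
    rw [this]
    exact L.add_mem h3 (L.zsmul_mem hw _)

lemma lattice_count {p : ℕ} (hp : p.Prime) (d : ℕ) : ∀ κ : Fin d → ℕ,
    ∃ T : Finset (AddSubgroup (Fin d → ℤ)), T.card ≤ 2 ^ (d * d) * p ^ (latCost (List.ofFn κ)) ∧
      ∀ L : AddSubgroup (Fin d → ℤ), MulClosed L → HasDiag p d κ L →
        (∃ M : ℕ, ∀ x : Fin d → ℤ, ((p : ℤ) ^ M) • x ∈ L) → L ∈ T := by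
  classical
  induction d with
  | zero =>
    intro κ
    refine ⟨{⊤}, by simp [latCost], fun L _ _ _ => ?_⟩
    rw [Finset.mem_singleton, Subsingleton.elim L ⊤]
  | succ d ih =>
    intro κ
    obtain ⟨T', hT'c, hT'⟩ := ih (Fin.tail κ)
    have key : ∀ L' : AddSubgroup (Fin d → ℤ), ∃ X : Finset (Fin d → ℤ),
        X.card ≤ 2 ^ d * p ^ (rowCost (κ 0) (List.ofFn (Fin.tail κ))) ∧
        ((MulClosed L' ∧ HasDiag p d (Fin.tail κ) L' ∧ (∃ M : ℕ, ∀ x : Fin d → ℤ, ((p : ℤ) ^ M) • x ∈ L')) →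
          Covers L' ((p : ℤ) ^ κ 0) 0 X) := by
      intro L'
      by_cases h : MulClosed L' ∧ HasDiag p d (Fin.tail κ) L' ∧ (∃ M : ℕ, ∀ x : Fin d → ℤ, ((p : ℤ) ^ M) • x ∈ L')
      · obtain ⟨h1, h2, M, h3⟩ := h
        obtain ⟨X, h4, h5⟩ := cover_main hp d (κ 0) (Fin.tail κ) L' h1 h2 M h3
        exact ⟨X, h4, fun _ => h5⟩
      · exact ⟨∅, by simp, fun h' => (h h').elim⟩
    choose X hXc hX using key
    refine ⟨T'.biUnion fun L' => (X L').image (extSub L' ((p : ℤ) ^ κ 0)), ?_, ?_⟩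
    · refine (Finset.card_biUnion_le_card_mul _ _ _ fun L' _ => Finset.card_image_le.trans (hXc L')).trans ?_
      refine (Nat.mul_le_mul_right _ hT'c).trans ?_
      rw [List.ofFn_succ]
      simp only [latCost, Fin.tail_def]
      have : 2 ^ (d * d) * 2 ^ d ≤ 2 ^ ((d + 1) * (d + 1)) := by
        rw [← pow_add]; exact Nat.pow_le_pow_right (by norm_num) (by nlinarith)
      calc _ = (2 ^ (d * d) * 2 ^ d) * p ^ (rowCost (κ 0) (List.ofFn fun i : Fin d => κ i.succ) + latCost (List.ofFn fun i : Fin d => κ i.succ)) := by ring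
        _ ≤ _ := Nat.mul_le_mul_right _ this
    · rintro L hL ⟨hD0, hD⟩ ⟨M, hM⟩
      have hM' : ∀ x : Fin d → ℤ, ((p : ℤ) ^ M) • x ∈ tailSub L := by
        intro x
        have := hM (Fin.cons 0 x)
        have h2 := tail_mem_tailSub this (by simp)
        have e : Fin.tail (((p : ℤ) ^ M) • (Fin.cons 0 x : Fin (d + 1) → ℤ)) = ((p : ℤ) ^ M) • x := by
          ext i; simp [Fin.tail]
        rw [e] at h2; exact h2
      have hL' := hT' _ hL.tail hD ⟨M, hM'⟩
      obtain ⟨w, hw, hw0⟩ := (hD0 _).mpr dvd_rfl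
      have hS : Stab L w := fun y hy => hL _ hw _ hy
      have h1 := tail_mem_tailSub (L.sub_mem (hL _ hw _ hw) (L.zsmul_mem hw ((p : ℤ) ^ κ 0))) (by simp [hw0])
      obtain ⟨x, hxX, hx⟩ := hX (tailSub L) ⟨hL.tail, hD, M, hM'⟩ (Fin.tail w) hS.tail (by
        convert h1 using 1
        ext i; simp [Fin.tail])
      rw [Finset.mem_biUnion]
      refine ⟨tailSub L, hL', Finset.mem_image.mpr ⟨x, hxX, ?_⟩⟩
      exact (eq_extSub L _ hD0 w hw hw0 x hx).symm


lemma index_eq_mul_tailSub {d : ℕ} (L : AddSubgroup (Fin (d + 1) → ℤ)) :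
    L.index = (L.map (Pi.evalAddMonoidHom (fun _ : Fin (d + 1) => ℤ) 0)).index * (tailSub L).index := by
  set π := Pi.evalAddMonoidHom (fun _ : Fin (d + 1) => ℤ) 0 with hπ
  have hsurj : Function.Surjective π := fun t => ⟨fun _ => t, rfl⟩
  have hr : (consZero d).range = π.ker := by
    ext z
    constructor
    · rintro ⟨y, rfl⟩
      simp [π, AddMonoidHom.mem_ker, consZero]
    · intro hz
      refine ⟨Fin.tail z, ?_⟩
      have h0 : z 0 = 0 := hz
      change (Fin.cons 0 (Fin.tail z) : Fin (d + 1) → ℤ) = z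
      rw [← h0, Fin.cons_self_tail]
  rw [tailSub, AddSubgroup.index_comap, hr, AddSubgroup.index_map, AddMonoidHom.range_eq_top.mpr hsurj,
    AddSubgroup.index_top, mul_one, ← AddSubgroup.relIndex_sup_left, mul_comm,
    AddSubgroup.relIndex_mul_index le_sup_left]

lemma exists_diag {p : ℕ} (hp : p.Prime) (d : ℕ) : ∀ (k : ℕ) (L : AddSubgroup (Fin d → ℤ)),
    L.index = p ^ k → ∃ κ : Fin d → ℕ, (List.ofFn κ).sum = k ∧ HasDiag p d κ L := by
  induction d with
  | zero =>
    intro k L hL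
    refine ⟨fun _ => 0, ?_, trivial⟩
    rw [Subsingleton.elim L ⊤, AddSubgroup.index_top] at hL
    have : k = 0 := by
      by_contra h
      have := Nat.one_lt_pow h hp.one_lt
      omega
    simp [this]
  | succ d ih =>
    intro k L hL
    rw [index_eq_mul_tailSub] at hL
    obtain ⟨a, ha⟩ := Int.subgroup_cyclic (L.map (Pi.evalAddMonoidHom (fun _ : Fin (d + 1) => ℤ) 0))
    rw [← AddSubgroup.zmultiples_eq_closure] at ha
    rw [ha, Int.index_zmultiples] at hL
    obtain ⟨i, hi, hai⟩ := (Nat.dvd_prime_pow hp).mp ⟨_, hL.symm⟩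
    obtain ⟨κ', hκ', hD⟩ := ih (k - i) (tailSub L) (by
      rw [hai] at hL
      have h2 : p ^ k = p ^ i * p ^ (k - i) := by rw [← pow_add]; congr 1; omega
      rw [h2] at hL
      exact Nat.eq_of_mul_eq_mul_left (pow_pos hp.pos _) hL)
    refine ⟨Fin.cons i κ', ?_, ?_, ?_⟩
    · rw [List.ofFn_succ]; simp [hκ']; omega
    · intro t
      have h3 : (∃ x ∈ L, x 0 = t) ↔ t ∈ L.map (Pi.evalAddMonoidHom (fun _ : Fin (d + 1) => ℤ) 0) := by
        rw [AddSubgroup.mem_map]; rfl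
      rw [h3, ha, Int.mem_zmultiples_iff, Fin.cons_zero, ← Int.natAbs_dvd, hai]
      push_cast; rfl
    · simpa using hD

def diffHom (d : ℕ) : (Fin (d + 1) → ℤ) →+ (Fin d → ℤ) where
  toFun z := fun i => z i.succ - z 0
  map_zero' := by ext i; simp
  map_add' x y := by ext i; simp; ring

lemma diffHom_surj (d : ℕ) : Function.Surjective (diffHom d) := fun y =>
  ⟨Fin.cons 0 y, by ext i; simp [diffHom]⟩

lemma subring_eq_comap {d : ℕ} (R : Subring (Fin (d + 1) → ℤ)) :
    R.toAddSubgroup = (tailSub R.toAddSubgroup).comap (diffHom d) := by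
  ext z
  rw [AddSubgroup.mem_comap, mem_tailSub]
  have h1 : (fun _ => z 0 : Fin (d + 1) → ℤ) ∈ R := by
    have := R.zsmul_mem R.one_mem (z 0)
    convert this using 1
    ext i; simp
  have e : (Fin.cons 0 (diffHom d z) : Fin (d + 1) → ℤ) = z - (fun _ => z 0) := by
    ext i; refine Fin.cases ?_ (fun i => ?_) i <;> simp [diffHom]
  rw [e]
  constructor
  · intro h; exact R.sub_mem h h1
  · intro h
    have := R.add_mem (show z - (fun _ => z 0) ∈ R from h) h1
    rw [sub_add_cancel] at this
    exact this

lemma subringCount_prime_pow {p : ℕ} (hp : p.Prime) (d k : ℕ) (hd : 5 ≤ d) (hk : 1 ≤ k) :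
    (subringCount (d + 1) (p ^ k) : ℝ) ≤
      ((k : ℝ) + 1) ^ d * 2 ^ (d * d) * (p : ℝ) ^ ((((d + 1 : ℕ) : ℝ) / 2 - 7 / 6) * k - 1) := by
  classical
  choose T hTc hT using lattice_count hp d
  set A := (Fintype.piFinset (fun _ : Fin d => Finset.range (k + 1))).filter (fun κ => (List.ofFn κ).sum = k)
  have hAcard : A.card ≤ (k + 1) ^ d := by
    refine (Finset.card_filter_le _ _).trans ?_
    simp
  set U := A.biUnion T
  have hU : (U.card : ℝ) ≤ ((k : ℝ) + 1) ^ d * 2 ^ (d * d) * (p : ℝ) ^ ((((d + 1 : ℕ) : ℝ) / 2 - 7 / 6) * k - 1) := by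
    have h1 : (U.card : ℝ) ≤ ∑ κ ∈ A, ((T κ).card : ℝ) := by exact_mod_cast Finset.card_biUnion_le
    have h2 : ∀ κ ∈ A, ((T κ).card : ℝ) ≤ 2 ^ (d * d) * (p : ℝ) ^ ((((d + 1 : ℕ) : ℝ) / 2 - 7 / 6) * k - 1) := by
      intro κ hκ
      have hs : (List.ofFn κ).sum = k := (Finset.mem_filter.mp hκ).2
      have h3 := latCost_main (List.ofFn κ) (by simpa using hd) (by omega)
      rw [hs, List.length_ofFn] at h3
      have h4 : ((T κ).card : ℝ) ≤ 2 ^ (d * d) * (p : ℝ) ^ (latCost (List.ofFn κ)) := by exact_mod_cast hTc κ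
      refine h4.trans ?_
      gcongr
      rw [← Real.rpow_natCast]
      apply Real.rpow_le_rpow_of_exponent_le (by exact_mod_cast hp.one_lt.le)
      have h5 : ((6 * latCost (List.ofFn κ) + 6 : ℕ) : ℝ) ≤ (((3 * d - 4) * k : ℕ) : ℝ) := by exact_mod_cast h3
      rw [Nat.cast_mul, Nat.cast_sub (by omega)] at h5
      push_cast at h5 ⊢
      linarith
    refine h1.trans ((Finset.sum_le_card_nsmul _ _ _ h2).trans ?_)
    rw [nsmul_eq_mul, mul_assoc]
    gcongr
    exact_mod_cast hAcard
  refine le_trans ?_ hU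
  have hmem : ∀ R : Subring (Fin (d + 1) → ℤ), R.toAddSubgroup.index = p ^ k → tailSub R.toAddSubgroup ∈ U := by
    intro R hR
    have hidx : (tailSub R.toAddSubgroup).index = p ^ k := by
      rw [← hR]
      conv_rhs => rw [subring_eq_comap R, AddSubgroup.index_comap_of_surjective _ (diffHom_surj d)]
    obtain ⟨κ, hκ, hD⟩ := exists_diag hp d k _ hidx
    refine Finset.mem_biUnion.mpr ⟨κ, Finset.mem_filter.mpr ⟨?_, hκ⟩, hT κ _ ?_ hD ⟨k, ?_⟩⟩
    · rw [Fintype.mem_piFinset]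
      intro i
      rw [Finset.mem_range, Nat.lt_succ_iff, ← hκ]
      exact List.le_sum_of_mem (by simp)
    · apply MulClosed.tail
      intro x hx y hy
      exact R.mul_mem hx hy
    · intro x
      have := AddSubgroup.nsmul_index_mem (tailSub R.toAddSubgroup) x
      rw [hidx] at this
      rw [← natCast_zsmul] at this
      simpa using this
  rw [subringCount]
  have hinj : Function.Injective (fun R : {R : Subring (Fin (d + 1) → ℤ) // R.toAddSubgroup.index = p ^ k} =>
      (⟨tailSub R.1.toAddSubgroup, hmem R.1 R.2⟩ : {L // L ∈ U})) := by
    intro R S h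
    simp only [Subtype.mk.injEq] at h
    apply Subtype.ext
    apply Subring.toAddSubgroup_injective
    rw [subring_eq_comap R.1, subring_eq_comap S.1, h]
  have := Nat.card_le_card_of_injective _ hinj
  have e : Nat.card {L // L ∈ U} = U.card := by rw [Nat.card_eq_fintype_card, Fintype.card_coe]
  rw [e] at this
  exact_mod_cast this

lemma finite_subrings (n r : ℕ) (hr : 1 ≤ r) : Finite {R : Subring (Fin n → ℤ) // R.toAddSubgroup.index = r} := by
  have : NeZero r := ⟨by omega⟩
  let φ : (Fin n → ℤ) → (Fin n → ZMod r) := fun x i => (x i : ZMod r)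
  refine Finite.of_injective (β := Set (Fin n → ZMod r)) (fun R => φ '' (R.1 : Set (Fin n → ℤ))) ?_
  have key : ∀ R : Subring (Fin n → ℤ), R.toAddSubgroup.index = r → ∀ x, φ x ∈ φ '' (R : Set (Fin n → ℤ)) → x ∈ R := by
    rintro R hR x ⟨y, hy, hxy⟩
    have h1 : ∀ i, ∃ t, x i - y i = r * t := by
      intro i
      have h2 : (y i : ZMod r) = (x i : ZMod r) := congrFun hxy i
      exact ((ZMod.intCast_eq_intCast_iff_dvd_sub _ _ _).mp h2)
    choose t ht using h1
    have h3 := AddSubgroup.nsmul_index_mem R.toAddSubgroup t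
    rw [hR] at h3
    have h4 : x = y + r • t := by ext i; simp; linarith [ht i]
    rw [h4]
    exact R.add_mem hy h3
  intro R S h
  simp only at h
  apply Subtype.ext
  ext x
  constructor
  · intro hx; exact key S.1 S.2 x (h ▸ Set.mem_image_of_mem _ hx)
  · intro hx; exact key R.1 R.2 x (h ▸ Set.mem_image_of_mem _ hx)

lemma subringCount_one (n : ℕ) : subringCount n 1 ≤ 1 := by
  rw [subringCount]
  have : Subsingleton {R : Subring (Fin n → ℤ) // R.toAddSubgroup.index = 1} := by
    constructor
    intro R S
    apply Subtype.ext
    apply Subring.toAddSubgroup_injective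
    rw [AddSubgroup.index_eq_one.mp R.2, AddSubgroup.index_eq_one.mp S.2]
  exact Finite.card_le_one_iff_subsingleton.mpr this

/-- `R + a ℤ^n` -/
def plusMod {n : ℕ} (R : Subring (Fin n → ℤ)) (a : ℕ) : Subring (Fin n → ℤ) where
  carrier := {z | ∃ x ∈ R, ∃ y : Fin n → ℤ, z = x + (a : ℤ) • y}
  zero_mem' := ⟨0, R.zero_mem, 0, by simp⟩
  one_mem' := ⟨1, R.one_mem, 0, by simp⟩
  add_mem' := by
    rintro _ _ ⟨x, hx, y, rfl⟩ ⟨x', hx', y', rfl⟩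
    exact ⟨x + x', R.add_mem hx hx', y + y', by ext i; simp; ring⟩
  neg_mem' := by
    rintro _ ⟨x, hx, y, rfl⟩
    exact ⟨-x, R.neg_mem hx, -y, by ext i; simp; ring⟩
  mul_mem' := by
    rintro _ _ ⟨x, hx, y, rfl⟩ ⟨x', hx', y', rfl⟩
    exact ⟨x * x', R.mul_mem hx hx', x * y' + y * x' + (a : ℤ) • (y * y'), by ext i; simp; ring⟩

lemma le_plusMod {n : ℕ} (R : Subring (Fin n → ℤ)) (a : ℕ) : R.toAddSubgroup ≤ (plusMod R a).toAddSubgroup :=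
  fun x hx => ⟨x, hx, 0, by simp⟩

lemma plusMod_index_dvd {n : ℕ} (R : Subring (Fin n → ℤ)) (a b : ℕ) (ha : 1 ≤ a)
    (hR : R.toAddSubgroup.index = a * b) (hab : Nat.Coprime a b) : (plusMod R a).toAddSubgroup.index ∣ a := by
  have h1 : (plusMod R a).toAddSubgroup.index ∣ a * b := hR ▸ AddSubgroup.index_dvd_of_le (le_plusMod R a)
  let φ : (Fin n → ℤ) →+ (Fin n → ZMod a) := (Int.castAddHom (ZMod a)).compLeft (Fin n)
  have hφ : Function.Surjective φ := by
    intro y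
    choose x hx using fun i => ZMod.intCast_surjective (y i)
    exact ⟨x, by ext i; simp [φ, hx]⟩
  have : NeZero a := ⟨by omega⟩
  have h2 : φ.ker ≤ (plusMod R a).toAddSubgroup := by
    intro x hx
    have : ∀ i, ∃ t, x i = a * t := by
      intro i
      have h3 : ((x i : ℤ) : ZMod a) = 0 := congrFun hx i
      exact (ZMod.intCast_zmod_eq_zero_iff_dvd _ _).mp h3
    choose t ht using this
    exact ⟨0, R.zero_mem, t, by ext i; simp [ht]⟩
  have h3 := AddSubgroup.index_dvd_of_le h2
  rw [AddSubgroup.index_ker, AddMonoidHom.range_eq_top.mpr hφ, AddSubgroup.card_top, Nat.card_eq_fintype_card, Fintype.card_pi] at h3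
  simp only [ZMod.card, Finset.prod_const, Finset.card_univ, Fintype.card_fin] at h3
  exact Nat.Coprime.dvd_of_dvd_mul_right (Nat.Coprime.coprime_dvd_left h3 (Nat.Coprime.pow_left n hab)) h1

lemma plusMod_inf {n : ℕ} (R : Subring (Fin n → ℤ)) (a b : ℕ) (ha : 1 ≤ a) (hb : 1 ≤ b)
    (hR : R.toAddSubgroup.index = a * b) (hab : Nat.Coprime a b) :
    (plusMod R a).toAddSubgroup ⊓ (plusMod R b).toAddSubgroup = R.toAddSubgroup := by
  apply le_antisymm _ (le_inf (le_plusMod R a) (le_plusMod R b))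
  rintro x ⟨⟨y, hy, z, hz⟩, ⟨y', hy', z', hz'⟩⟩
  have hmem : ∀ t : Fin n → ℤ, ((a : ℤ) * b) • t ∈ R := by
    intro t
    have := AddSubgroup.nsmul_index_mem R.toAddSubgroup t
    rw [hR, ← natCast_zsmul] at this
    push_cast at this
    exact this
  obtain ⟨u, v, huv⟩ := Nat.isCoprime_iff_coprime.mpr hab
  have h1 : x = u • ((a : ℤ) • y' + ((a : ℤ) * b) • z') + v • ((b : ℤ) • y + ((a : ℤ) * b) • z) := by
    ext i
    have e1 := congrFun hz i
    have e2 := congrFun hz' i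
    simp at e1 e2 ⊢
    linear_combination (-x i) * huv + (u * a) * e2 + (v * b) * e1
  change x ∈ R
  rw [h1]
  exact R.add_mem (R.zsmul_mem (R.add_mem (R.zsmul_mem hy' _) (hmem _)) _)
    (R.zsmul_mem (R.add_mem (R.zsmul_mem hy _) (hmem _)) _)

lemma subringCount_mul_le (n a b : ℕ) (ha : 1 ≤ a) (hb : 1 ≤ b) (hab : Nat.Coprime a b) :
    subringCount n (a * b) ≤ subringCount n a * subringCount n b := by
  have := finite_subrings n a ha
  have := finite_subrings n b hb
  rw [subringCount, subringCount, subringCount, ← Nat.card_prod]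
  have hidx : ∀ R : Subring (Fin n → ℤ), R.toAddSubgroup.index = a * b →
      (plusMod R a).toAddSubgroup.index = a ∧ (plusMod R b).toAddSubgroup.index = b := by
    intro R hR
    have h1 := Nat.le_of_dvd (by omega) (plusMod_index_dvd R a b ha hR hab)
    have h2 := Nat.le_of_dvd (by omega) (plusMod_index_dvd R b a hb (by rw [hR, mul_comm]) hab.symm)
    have h3 := AddSubgroup.index_inf_le (H := (plusMod R a).toAddSubgroup) (K := (plusMod R b).toAddSubgroup)
    rw [plusMod_inf R a b ha hb hR hab, hR] at h3
    constructor
    · by_contra h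
      have : (plusMod R a).toAddSubgroup.index < a := lt_of_le_of_ne h1 h
      have := Nat.mul_lt_mul_of_lt_of_le this h2 (by omega)
      omega
    · by_contra h
      have : (plusMod R b).toAddSubgroup.index < b := lt_of_le_of_ne h2 h
      have := Nat.mul_lt_mul_of_le_of_lt h1 this (by omega)
      omega
  refine Nat.card_le_card_of_injective
    (fun R : {R : Subring (Fin n → ℤ) // R.toAddSubgroup.index = a * b} =>
      ((⟨plusMod R.1 a, (hidx R.1 R.2).1⟩ : {R : Subring (Fin n → ℤ) // R.toAddSubgroup.index = a}),
       (⟨plusMod R.1 b, (hidx R.1 R.2).2⟩ : {R : Subring (Fin n → ℤ) // R.toAddSubgroup.index = b}))) ?_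
  intro R S h
  simp only [Prod.mk.injEq, Subtype.mk.injEq] at h
  apply Subtype.ext
  apply Subring.toAddSubgroup_injective
  rw [← plusMod_inf R.1 a b ha hb R.2 hab, ← plusMod_inf S.1 a b ha hb S.2 hab, h.1, h.2]


noncomputable def locG (d : ℕ) (ε : ℝ) (p k : ℕ) : ℝ :=
  ((k : ℝ) + 1) ^ d * 2 ^ (d * d) * ((p : ℝ)⁻¹ * ((p : ℝ) ^ (-ε)) ^ k)

noncomputable def mulG (d : ℕ) (ε : ℝ) (r : ℕ) : ℝ := r.factorization.prod (locG d ε)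

lemma locG_nonneg (d : ℕ) (ε : ℝ) (p k : ℕ) : 0 ≤ locG d ε p k := by
  unfold locG; positivity

lemma mulG_nonneg (d : ℕ) (ε : ℝ) (r : ℕ) : 0 ≤ mulG d ε r := by
  rw [mulG, Finsupp.prod]
  exact Finset.prod_nonneg fun _ _ => locG_nonneg _ _ _ _

lemma mulG_one (d : ℕ) (ε : ℝ) : mulG d ε 1 = 1 := by simp [mulG]

lemma mulG_mul (d : ℕ) (ε : ℝ) {a b : ℕ} (h : Nat.Coprime a b) :
    mulG d ε (a * b) = mulG d ε a * mulG d ε b := by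
  unfold mulG
  rw [Nat.factorization_mul_of_coprime h, Finsupp.prod_add_index_of_disjoint]
  simpa using h.disjoint_primeFactors

lemma mulG_prime_pow (d : ℕ) (ε : ℝ) {p k : ℕ} (hp : p.Prime) (hk : k ≠ 0) :
    mulG d ε (p ^ k) = locG d ε p k := by
  unfold mulG
  rw [hp.factorization_pow, Finsupp.prod, Finsupp.support_single _ hk]
  simp

lemma subringCount_le_mulG (d : ℕ) (hd : 5 ≤ d) (ε : ℝ) (r : ℕ) (hr : r ≠ 0) :
    (subringCount (d + 1) r : ℝ) ≤ mulG d ε r * (r : ℝ) ^ (((d + 1 : ℕ) : ℝ) / 2 - 7 / 6 + ε) := by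
  set s := (((d + 1 : ℕ) : ℝ) / 2 - 7 / 6) with hs
  induction r using Nat.recOnPosPrimePosCoprime with
  | zero => exact (hr rfl).elim
  | one =>
    rw [mulG_one]
    have := subringCount_one (d + 1)
    simp only [Nat.cast_one, Real.one_rpow, mul_one]
    exact_mod_cast this
  | prime_pow p k hp hk =>
    refine (subringCount_prime_pow hp d k hd hk).trans (le_of_eq ?_)
    rw [mulG_prime_pow d ε hp hk.ne', locG, mul_assoc, mul_assoc, mul_assoc, mul_assoc]
    congr 2
    have hp0 : (0 : ℝ) < p := by exact_mod_cast hp.pos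
    rw [← Real.rpow_natCast ((p : ℝ) ^ (-ε)), ← Real.rpow_mul hp0.le, Nat.cast_pow,
      ← Real.rpow_natCast (p : ℝ) k, ← Real.rpow_mul hp0.le, ← Real.rpow_neg_one, ← Real.rpow_add hp0,
      ← Real.rpow_add hp0]
    congr 1
    ring
  | coprime a b ha hb hab iha ihb =>
    have h1 := subringCount_mul_le (d + 1) a b (by omega) (by omega) hab
    have h2 : (subringCount (d + 1) (a * b) : ℝ) ≤ subringCount (d + 1) a * subringCount (d + 1) b := by
      exact_mod_cast h1
    refine h2.trans ((mul_le_mul (iha (by omega)) (ihb (by omega)) (by positivity)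
      (mul_nonneg (mulG_nonneg _ _ _) (by positivity))).trans (le_of_eq ?_))
    rw [mulG_mul d ε hab, Nat.cast_mul, Real.mul_rpow (by positivity) (by positivity)]
    ring

lemma local_factor (d : ℕ) (ε : ℝ) (hε : 0 < ε) : ∃ K : ℝ, 0 ≤ K ∧ ∀ p : ℕ, p.Prime →
    Summable (fun k : ℕ => mulG d ε (p ^ k)) ∧
    ∑' k : ℕ, mulG d ε (p ^ k) ≤ 1 + K * (p : ℝ) ^ (-(1 + ε)) := by
  set ρ : ℝ := (2 : ℝ) ^ (-ε) with hρ
  have hρ0 : 0 < ρ := by positivity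
  have hρ1 : ρ < 1 := Real.rpow_lt_one_of_one_lt_of_neg (by norm_num) (by linarith)
  have hS : Summable (fun k : ℕ => ((k : ℝ) + 2) ^ d * 2 ^ (d * d) * ρ ^ k) := by
    have h1 := summable_pow_mul_geometric_of_norm_lt_one d (r := ρ) (by rw [Real.norm_of_nonneg hρ0.le]; exact hρ1)
    have h2 := (summable_nat_add_iff 2).mpr h1
    have h3 := h2.mul_left (2 ^ (d * d) * (ρ ^ 2)⁻¹)
    refine h3.congr fun k => ?_
    push_cast
    rw [pow_add]
    field_simp
  refine ⟨∑' k : ℕ, ((k : ℝ) + 2) ^ d * 2 ^ (d * d) * ρ ^ k, tsum_nonneg fun k => by positivity, ?_⟩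
  intro p hp
  have hp0 : (0 : ℝ) < p := by exact_mod_cast hp.pos
  have hpρ : (p : ℝ) ^ (-ε) ≤ ρ := Real.rpow_le_rpow_of_nonpos (by norm_num) (by exact_mod_cast hp.two_le) (by linarith)
  have hb : ∀ k : ℕ, mulG d ε (p ^ (k + 1)) ≤ (p : ℝ) ^ (-(1 + ε)) * (((k : ℝ) + 2) ^ d * 2 ^ (d * d) * ρ ^ k) := by
    intro k
    rw [mulG_prime_pow d ε hp (by omega), locG]
    have e : (p : ℝ) ^ (-(1 + ε)) = (p : ℝ)⁻¹ * (p : ℝ) ^ (-ε) := by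
      rw [← Real.rpow_neg_one, ← Real.rpow_add hp0]; congr 1; ring
    rw [e]
    have e2 : (((k + 1 : ℕ) : ℝ) + 1) = (k : ℝ) + 2 := by push_cast; ring
    rw [e2, pow_succ]
    have h4 : ((p : ℝ) ^ (-ε)) ^ k ≤ ρ ^ k := pow_le_pow_left₀ (by positivity) hpρ k
    calc _ = ((p : ℝ)⁻¹ * (p : ℝ) ^ (-ε)) * (((k : ℝ) + 2) ^ d * 2 ^ (d * d) * ((p : ℝ) ^ (-ε)) ^ k) := by ring
      _ ≤ _ := by gcongr
  have hs1 : Summable (fun k : ℕ => mulG d ε (p ^ (k + 1))) :=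
    Summable.of_nonneg_of_le (fun k => mulG_nonneg _ _ _) hb (hS.mul_left _)
  have hs0 : Summable (fun k : ℕ => mulG d ε (p ^ k)) := (summable_nat_add_iff 1).mp hs1
  refine ⟨hs0, ?_⟩
  rw [hs0.tsum_eq_zero_add, pow_zero, mulG_one]
  have := Summable.tsum_le_tsum hb hs1 (hS.mul_left _)
  rw [tsum_mul_left] at this
  linarith

lemma sum_mulG_bounded (d : ℕ) (ε : ℝ) (hε : 0 < ε) : ∃ C : ℝ, 0 < C ∧ ∀ B : ℕ,
    ∑ r ∈ Finset.Icc 1 B, mulG d ε r ≤ C := by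
  classical
  obtain ⟨K, hK, hloc⟩ := local_factor d ε hε
  have hsum : Summable (fun m : ℕ => K * (m : ℝ) ^ (-(1 + ε))) :=
    (Real.summable_nat_rpow.mpr (by linarith)).mul_left K
  refine ⟨Real.exp (∑' m : ℕ, K * (m : ℝ) ^ (-(1 + ε))), Real.exp_pos _, fun B => ?_⟩
  obtain ⟨h1, h2⟩ := EulerProduct.summable_and_hasSum_smoothNumbers_prod_primesBelow_tsum
    (f := mulG d ε) (mulG_one d ε) (fun h => mulG_mul d ε h)
    (fun {p} hp => (hloc p hp).1.norm) (B + 1)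
  have h3 : ∑ r ∈ Finset.Icc 1 B, mulG d ε r ≤ ∏ p ∈ (B + 1).primesBelow, ∑' n : ℕ, mulG d ε (p ^ n) := by
    rw [← h2.tsum_eq]
    have hm : ∀ r ∈ Finset.Icc 1 B, r ∈ (B + 1).smoothNumbers := by
      intro r hr
      rw [Finset.mem_Icc] at hr
      rw [Nat.mem_smoothNumbers]
      refine ⟨by omega, fun p hp => ?_⟩
      have := Nat.le_of_dvd (by omega) (Nat.dvd_of_mem_primeFactorsList hp)
      omega
    rw [← Finset.sum_attach]
    have h4 := h2.summable.sum_le_tsum ((Finset.Icc 1 B).attach.map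
      ⟨fun r => (⟨r.1, hm r.1 r.2⟩ : (B + 1).smoothNumbers), fun a b h => Subtype.ext (by simpa using h)⟩)
      (fun i _ => mulG_nonneg _ _ _)
    rw [Finset.sum_map] at h4
    exact h4
  refine h3.trans ?_
  calc ∏ p ∈ (B + 1).primesBelow, ∑' n : ℕ, mulG d ε (p ^ n)
      ≤ ∏ p ∈ (B + 1).primesBelow, Real.exp (K * (p : ℝ) ^ (-(1 + ε))) := by
        refine Finset.prod_le_prod (fun p _ => tsum_nonneg fun k => mulG_nonneg _ _ _) fun p hp => ?_
        refine (hloc p (Nat.prime_of_mem_primesBelow hp)).2.trans ?_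
        rw [add_comm]; exact Real.add_one_le_exp _
    _ = Real.exp (∑ p ∈ (B + 1).primesBelow, K * (p : ℝ) ^ (-(1 + ε))) := (Real.exp_sum _ _).symm
    _ ≤ _ := Real.exp_le_exp.mpr (hsum.sum_le_tsum _ fun i _ => by positivity)

lemma upper_bound (n : ℕ) (hn : 6 ≤ n) (ε : ℝ) (hε : 0 < ε) : ∃ C : ℝ, 0 < C ∧ ∀ B : ℕ,
    (subringCountUpTo n B : ℝ) ≤ C * (B : ℝ) ^ ((n : ℝ) / 2 - 7 / 6 + ε) := by
  obtain ⟨d, rfl⟩ : ∃ d, n = d + 1 := ⟨n - 1, by omega⟩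
  obtain ⟨C, hC, h⟩ := sum_mulG_bounded d ε hε
  refine ⟨C, hC, fun B => ?_⟩
  rw [subringCountUpTo, Nat.cast_sum]
  have hexp : 0 ≤ ((d + 1 : ℕ) : ℝ) / 2 - 7 / 6 + ε := by
    have : (6 : ℝ) ≤ ((d + 1 : ℕ) : ℝ) := by exact_mod_cast hn
    linarith
  calc ∑ r ∈ Finset.Icc 1 B, (subringCount (d + 1) r : ℝ)
      ≤ ∑ r ∈ Finset.Icc 1 B, mulG d ε r * (B : ℝ) ^ (((d + 1 : ℕ) : ℝ) / 2 - 7 / 6 + ε) := by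
        refine Finset.sum_le_sum fun r hr => ?_
        rw [Finset.mem_Icc] at hr
        refine (subringCount_le_mulG d (by omega) ε r (by omega)).trans ?_
        refine mul_le_mul_of_nonneg_left ?_ (mulG_nonneg _ _ _)
        exact Real.rpow_le_rpow (by positivity) (by exact_mod_cast hr.2) hexp
    _ = (∑ r ∈ Finset.Icc 1 B, mulG d ε r) * (B : ℝ) ^ (((d + 1 : ℕ) : ℝ) / 2 - 7 / 6 + ε) := by
        rw [Finset.sum_mul]
    _ ≤ _ := mul_le_mul_of_nonneg_right (h B) (by positivity)


section count
variable (Q : ℕ)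

/-- members of the progression `1 mod Q` -/
def prog (t : ℕ) : ℕ := 1 + Q * t

lemma prog_pos (t : ℕ) : 0 < prog Q t := by unfold prog; omega

lemma prog_div_le (g t : ℕ) (hg : g ∣ prog Q t) : g * prog Q (t / g) ≤ prog Q t := by
  unfold prog at *
  have h := Nat.mod_add_div t g
  set s := t / g
  set r := t % g
  have h1 : 1 + Q * t = (1 + Q * r) + g * (Q * s) := by rw [← h]; ring
  have h2 : g ∣ 1 + Q * r := by
    rw [h1] at hg
    exact (Nat.dvd_add_left (Dvd.intro _ rfl)).mp hg
  have h3 := Nat.le_of_dvd (by omega) h2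
  rw [h1]
  nlinarith

lemma prog_injOn (g : ℕ) (s : Finset ℕ) : Set.InjOn (fun t => t / g) (s.filter (fun t => g ∣ prog Q t) : Finset ℕ) := by
  intro a ha b hb hab
  simp only [Finset.coe_filter, Set.mem_setOf_eq] at ha hb hab
  have hc : Nat.Coprime g Q := by
    have h1 := ha.2
    rw [Nat.coprime_iff_gcd_eq_one]
    have h2 : Nat.gcd g Q ∣ prog Q a := (Nat.gcd_dvd_left _ _).trans h1
    unfold prog at h2
    have h3 : Nat.gcd g Q ∣ Q * a := (Nat.gcd_dvd_right _ _).mul_right _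
    exact Nat.dvd_one.mp ((Nat.dvd_add_left h3).mp h2)
  have h4 : (1 + Q * a) ≡ (1 + Q * b) [MOD g] :=
    ((Nat.modEq_zero_iff_dvd.mpr ha.2).trans (Nat.modEq_zero_iff_dvd.mpr hb.2).symm)
  have h5 : Q * a ≡ Q * b [MOD g] := Nat.ModEq.add_left_cancel' 1 h4
  have h6 : a ≡ b [MOD g] := Nat.ModEq.cancel_left_of_coprime hc h5
  rw [← Nat.mod_add_div a g, ← Nat.mod_add_div b g, hab, h6]

noncomputable def progSum (T : ℕ) : ℝ := ∑ t ∈ Finset.range T, ((prog Q t : ℝ))⁻¹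

lemma progSum_nonneg (T : ℕ) : 0 ≤ progSum Q T := Finset.sum_nonneg fun _ _ => by positivity

lemma progSum_dvd (T g : ℕ) (hg : 1 ≤ g) :
    ∑ t ∈ (Finset.range T).filter (fun t => g ∣ prog Q t), ((prog Q t : ℝ))⁻¹ ≤ progSum Q T * (g : ℝ)⁻¹ := by
  classical
  have hg0 : (0 : ℝ) < g := by exact_mod_cast hg
  have h1 : ∑ t ∈ (Finset.range T).filter (fun t => g ∣ prog Q t), ((prog Q t : ℝ))⁻¹ ≤
      ∑ t ∈ (Finset.range T).filter (fun t => g ∣ prog Q t), ((prog Q (t / g) : ℝ))⁻¹ * (g : ℝ)⁻¹ := by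
    refine Finset.sum_le_sum fun t ht => ?_
    have h2 := prog_div_le Q g t (Finset.mem_filter.mp ht).2
    have h3 : (g : ℝ) * prog Q (t / g) ≤ prog Q t := by exact_mod_cast h2
    have h4 : (0 : ℝ) < prog Q (t / g) := by exact_mod_cast prog_pos Q _
    rw [← mul_inv, mul_comm]
    exact inv_anti₀ (by positivity) h3
  refine h1.trans ?_
  rw [← Finset.sum_mul]
  refine mul_le_mul_of_nonneg_right ?_ (by positivity)
  rw [← Finset.sum_image (f := fun s => ((prog Q s : ℝ))⁻¹) (prog_injOn Q g _)]
  refine Finset.sum_le_sum_of_subset_of_nonneg ?_ fun _ _ _ => by positivity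
  intro s hs
  obtain ⟨t, ht, rfl⟩ := Finset.mem_image.mp hs
  have := Finset.mem_range.mp (Finset.mem_filter.mp ht).1
  exact Finset.mem_range.mpr (lt_of_le_of_lt (Nat.div_le_self _ _) this)

lemma prog_count (U g : ℕ) :
    ((Finset.range U).filter (fun t => g ∣ prog Q t)).card ≤ U / g + 1 := by
  classical
  rw [← Finset.card_image_of_injOn (prog_injOn Q g (Finset.range U))]
  refine (Finset.card_le_card (t := Finset.range (U / g + 1)) ?_).trans (by simp)
  intro s hs
  obtain ⟨t, ht, rfl⟩ := Finset.mem_image.mp hs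
  have := Finset.mem_range.mp (Finset.mem_filter.mp ht).1
  exact Finset.mem_range.mpr (Nat.lt_succ_of_le (Nat.div_le_div_right this.le))

lemma tuple_sum (k T g : ℕ) (hg : 1 ≤ g) (D : Finset (Fin k)) :
    ∑ t ∈ (Fintype.piFinset (fun _ : Fin k => Finset.range T)).filter (fun t => ∀ i ∈ D, g ∣ prog Q (t i)),
      ∏ i, ((prog Q (t i) : ℝ))⁻¹ ≤ progSum Q T ^ k * ((g : ℝ)⁻¹) ^ D.card := by
  classical
  have e : (Fintype.piFinset (fun _ : Fin k => Finset.range T)).filter (fun t => ∀ i ∈ D, g ∣ prog Q (t i)) =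
      Fintype.piFinset (fun i : Fin k => if i ∈ D then (Finset.range T).filter (fun t => g ∣ prog Q t) else Finset.range T) := by
    ext t
    simp only [Finset.mem_filter, Fintype.mem_piFinset]
    constructor
    · rintro ⟨h1, h2⟩ i
      by_cases hi : i ∈ D
      · rw [if_pos hi]; exact Finset.mem_filter.mpr ⟨h1 i, h2 i hi⟩
      · rw [if_neg hi]; exact h1 i
    · intro h
      refine ⟨fun i => ?_, fun i hi => ?_⟩
      · have := h i
        by_cases hi : i ∈ D
        · rw [if_pos hi] at this; exact (Finset.mem_filter.mp this).1
        · rw [if_neg hi] at this; exact this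
      · have := h i
        rw [if_pos hi] at this; exact (Finset.mem_filter.mp this).2
  rw [e, ← Finset.prod_univ_sum (f := fun _ t => ((prog Q t : ℝ))⁻¹)]
  have h1 : ∏ i : Fin k, (progSum Q T * (if i ∈ D then (g : ℝ)⁻¹ else 1)) = progSum Q T ^ k * ((g : ℝ)⁻¹) ^ D.card := by
    rw [Finset.prod_mul_distrib]
    simp [Finset.prod_ite_mem]
  rw [← h1]
  refine Finset.prod_le_prod (fun i _ => Finset.sum_nonneg fun _ _ => by positivity) fun i _ => ?_
  by_cases hi : i ∈ D
  · simp only [if_pos hi]; exact progSum_dvd Q T g hg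
  · simp only [if_neg hi, mul_one]; exact le_rfl

lemma tuple_sum_all (k T : ℕ) :
    ∑ t ∈ (Fintype.piFinset (fun _ : Fin k => Finset.range T)),
      ∏ i, ((prog Q (t i) : ℝ))⁻¹ = progSum Q T ^ k := by
  classical
  rw [← Finset.prod_univ_sum (f := fun _ t => ((prog Q t : ℝ))⁻¹)]
  simp [progSum]

lemma dvd_prog_gt {z g t : ℕ} (hg : g ∣ prog z.factorial t) (hg1 : g ≠ 1) : z < g := by
  by_contra h
  push Not at h
  have hpos := prog_pos z.factorial t
  have h0 : 0 < g := Nat.pos_of_dvd_of_pos hg hpos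
  have h1 : g ∣ z.factorial * t := (Nat.dvd_factorial h0 h).mul_right _
  unfold prog at hg
  exact hg1 (Nat.dvd_one.mp ((Nat.dvd_add_left h1).mp hg))

lemma progSum_ge (hQ : 1 ≤ Q) (T : ℕ) : Real.log (T + 1) / Q ≤ progSum Q T := by
  have hQ0 : (0 : ℝ) < Q := by exact_mod_cast hQ
  have h1 : Real.log ((T + 1 : ℕ) : ℝ) ≤ ((harmonic T : ℚ) : ℝ) := log_add_one_le_harmonic T
  have h2 : ((harmonic T : ℚ) : ℝ) / Q ≤ progSum Q T := by
    rw [harmonic, progSum]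
    push_cast
    rw [Finset.sum_div]
    refine Finset.sum_le_sum fun t _ => ?_
    rw [div_eq_mul_inv, ← mul_inv]
    refine inv_anti₀ (by exact_mod_cast prog_pos Q t) ?_
    unfold prog
    push_cast
    have : (1 : ℝ) ≤ Q := by exact_mod_cast hQ
    nlinarith
  refine le_trans ?_ h2
  push_cast at h1
  gcongr
end count


/-- the box of tuples -/
def tbox (k T : ℕ) : Finset (Fin k → ℕ) := Fintype.piFinset (fun _ : Fin k => Finset.range T)

lemma bad_pair (Q k T g : ℕ) (hg : 1 ≤ g) (W : ℝ) (hW : 0 ≤ W) (U : (Fin k → ℕ) → ℕ)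
    (hU : ∀ t ∈ tbox k T, (U t : ℝ) ≤ W * ∏ i, ((prog Q (t i) : ℝ))⁻¹) (i j : Fin k) (hij : i ≠ j) :
    ∑ t ∈ tbox k T, ∑ u ∈ Finset.range (U t),
      (if g ∣ prog Q (t i) ∧ g ∣ prog Q (t j) then (1 : ℝ) else 0) ≤
      2 * W * progSum Q T ^ k * ((g : ℝ) ^ 2)⁻¹ := by
  classical
  have h1 := tuple_sum Q k T g hg {i, j}
  rw [Finset.card_pair hij] at h1
  have h2 : ∑ t ∈ tbox k T, ∑ u ∈ Finset.range (U t),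
      (if g ∣ prog Q (t i) ∧ g ∣ prog Q (t j) then (1 : ℝ) else 0) ≤
      ∑ t ∈ (Fintype.piFinset (fun _ : Fin k => Finset.range T)).filter
        (fun t => ∀ l ∈ ({i, j} : Finset (Fin k)), g ∣ prog Q (t l)),
      W * ∏ i, ((prog Q (t i) : ℝ))⁻¹ := by
    rw [Finset.sum_filter]
    refine Finset.sum_le_sum fun t ht => ?_
    simp only [Finset.mem_insert, Finset.mem_singleton, forall_eq_or_imp, forall_eq]
    split_ifs with h
    · simpa using hU t ht
    · simp
  refine h2.trans ?_
  rw [← Finset.mul_sum]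
  have h3 : 0 ≤ W * (progSum Q T ^ k * ((g : ℝ) ^ 2)⁻¹) := by
    have := progSum_nonneg Q T
    positivity
  rw [inv_pow] at h1
  have := mul_le_mul_of_nonneg_left h1 hW
  linarith

lemma bad_last (Q k T g Y : ℕ) (hg : 1 ≤ g) (hgY : g ≤ Y) (W : ℝ) (hW : 0 ≤ W) (U : (Fin k → ℕ) → ℕ)
    (hU : ∀ t ∈ tbox k T, (U t : ℝ) ≤ W * ∏ i, ((prog Q (t i) : ℝ))⁻¹)
    (hY : ∀ t ∈ tbox k T, (Y : ℝ) ≤ W * ∏ i, ((prog Q (t i) : ℝ))⁻¹) (i : Fin k) :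
    ∑ t ∈ tbox k T, ∑ u ∈ Finset.range (U t),
      (if g ∣ prog Q (t i) ∧ g ∣ prog Q u then (1 : ℝ) else 0) ≤
      2 * W * progSum Q T ^ k * ((g : ℝ) ^ 2)⁻¹ := by
  classical
  have hg0 : (0 : ℝ) < g := by exact_mod_cast hg
  have h1 := tuple_sum Q k T g hg {i}
  rw [Finset.card_singleton, pow_one] at h1
  have h2 : ∑ t ∈ tbox k T, ∑ u ∈ Finset.range (U t),
      (if g ∣ prog Q (t i) ∧ g ∣ prog Q u then (1 : ℝ) else 0) ≤
      ∑ t ∈ (Fintype.piFinset (fun _ : Fin k => Finset.range T)).filter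
        (fun t => ∀ l ∈ ({i} : Finset (Fin k)), g ∣ prog Q (t l)),
      (2 * W * (g : ℝ)⁻¹) * ∏ i, ((prog Q (t i) : ℝ))⁻¹ := by
    rw [Finset.sum_filter]
    refine Finset.sum_le_sum fun t ht => ?_
    simp only [Finset.mem_singleton, forall_eq]
    split_ifs with h
    · simp only [h, true_and]
      rw [Finset.sum_boole]
      have h3 : (((Finset.range (U t)).filter (fun u => g ∣ prog Q u)).card : ℝ) ≤ ((U t / g + 1 : ℕ) : ℝ) := by
        exact_mod_cast prog_count Q (U t) g
      have h4 : ((U t / g : ℕ) : ℝ) ≤ (U t : ℝ) / g := Nat.cast_div_le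
      push_cast at h3
      have h5 := hU t ht
      have h6 := hY t ht
      have h7 : (g : ℝ) ≤ Y := by exact_mod_cast hgY
      set w := W * ∏ i, ((prog Q (t i) : ℝ))⁻¹ with hw
      have h8 : (2 * W * (g : ℝ)⁻¹) * ∏ i, ((prog Q (t i) : ℝ))⁻¹ = w / g + w / g := by
        rw [hw]; field_simp; ring
      rw [h8]
      have h9 : (U t : ℝ) / g ≤ w / g := by gcongr
      have h10 : 1 ≤ w / g := by rw [le_div_iff₀ hg0]; linarith
      linarith
    · simp [h]
  refine h2.trans ?_
  rw [← Finset.mul_sum]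
  have := mul_le_mul_of_nonneg_left h1 (show 0 ≤ 2 * W * (g : ℝ)⁻¹ by positivity)
  refine this.trans (le_of_eq ?_)
  field_simp

/-- good pairs -/
def goodT (Q k : ℕ) (t : Fin k → ℕ) (u : ℕ) : Prop :=
  (∀ i j, i ≠ j → Nat.Coprime (prog Q (t i)) (prog Q (t j))) ∧
  ∀ i, Nat.Coprime (prog Q (t i)) (prog Q u)

open Classical in
lemma good_cover (z k T Y : ℕ) (hY : z.factorial * T = Y) (t : Fin k → ℕ) (ht : t ∈ tbox k T) (u : ℕ) :
    (1 : ℝ) ≤ (if goodT z.factorial k t u then 1 else 0) +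
      ∑ i, ∑ j, ∑ g ∈ Finset.Ioc z Y,
        (if i ≠ j then (if g ∣ prog z.factorial (t i) ∧ g ∣ prog z.factorial (t j) then (1 : ℝ) else 0) else 0) +
      ∑ i, ∑ g ∈ Finset.Ioc z Y,
        (if g ∣ prog z.factorial (t i) ∧ g ∣ prog z.factorial u then (1 : ℝ) else 0) := by
  have hA : ∀ i, prog z.factorial (t i) ≤ Y := by
    intro i
    have := Finset.mem_range.mp (Fintype.mem_piFinset.mp ht i)
    have hz := Nat.factorial_pos z
    unfold prog
    rw [← hY]
    nlinarith
  have n1 : (0 : ℝ) ≤ ∑ i, ∑ j, ∑ g ∈ Finset.Ioc z Y,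
        (if i ≠ j then (if g ∣ prog z.factorial (t i) ∧ g ∣ prog z.factorial (t j) then (1 : ℝ) else 0) else 0) := by positivity
  have n2 : (0 : ℝ) ≤ ∑ i, ∑ g ∈ Finset.Ioc z Y,
        (if g ∣ prog z.factorial (t i) ∧ g ∣ prog z.factorial u then (1 : ℝ) else 0) := by positivity
  by_cases h : goodT z.factorial k t u
  · rw [if_pos h]; linarith
  · rw [if_neg h]
    unfold goodT at h
    rw [not_and_or] at h
    push Not at h
    have hmem : ∀ i b, ¬ Nat.Coprime (prog z.factorial (t i)) b →
        Nat.gcd (prog z.factorial (t i)) b ∈ Finset.Ioc z Y := by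
      intro i b hb
      refine Finset.mem_Ioc.mpr ⟨dvd_prog_gt (Nat.gcd_dvd_left _ _) hb, ?_⟩
      exact (Nat.le_of_dvd (prog_pos _ _) (Nat.gcd_dvd_left _ _)).trans (hA i)
    rcases h with ⟨i, j, hij, hc⟩ | ⟨i, hc⟩
    · have : (1 : ℝ) ≤ ∑ i, ∑ j, ∑ g ∈ Finset.Ioc z Y,
        (if i ≠ j then (if g ∣ prog z.factorial (t i) ∧ g ∣ prog z.factorial (t j) then (1 : ℝ) else 0) else 0) := by
        refine le_trans ?_ (Finset.single_le_sum (fun i _ => by positivity) (Finset.mem_univ i))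
        refine le_trans ?_ (Finset.single_le_sum (fun i _ => by positivity) (Finset.mem_univ j))
        refine le_trans ?_ (Finset.single_le_sum (fun i _ => by positivity) (hmem i _ hc))
        rw [if_pos hij, if_pos ⟨Nat.gcd_dvd_left _ _, Nat.gcd_dvd_right _ _⟩]
      linarith
    · have : (1 : ℝ) ≤ ∑ i, ∑ g ∈ Finset.Ioc z Y,
        (if g ∣ prog z.factorial (t i) ∧ g ∣ prog z.factorial u then (1 : ℝ) else 0) := by
        refine le_trans ?_ (Finset.single_le_sum (fun i _ => by positivity) (Finset.mem_univ i))
        refine le_trans ?_ (Finset.single_le_sum (fun i _ => by positivity) (hmem i _ hc))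
        rw [if_pos ⟨Nat.gcd_dvd_left _ _, Nat.gcd_dvd_right _ _⟩]
      linarith

open Classical in
lemma good_count (z k T Y : ℕ) (hz : 8 * (k * k + k) + 2 ≤ z) (hY : z.factorial * T = Y) (hzY : z ≤ Y) (W : ℝ) (hW : 0 ≤ W)
    (U : (Fin k → ℕ) → ℕ)
    (hU : ∀ t ∈ tbox k T, (U t : ℝ) ≤ W * ∏ i, ((prog z.factorial (t i) : ℝ))⁻¹)
    (hUl : ∀ t ∈ tbox k T, W / 2 * ∏ i, ((prog z.factorial (t i) : ℝ))⁻¹ ≤ (U t : ℝ))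
    (hYW : ∀ t ∈ tbox k T, (Y : ℝ) ≤ W * ∏ i, ((prog z.factorial (t i) : ℝ))⁻¹) :
    W / 4 * progSum z.factorial T ^ k ≤
      ∑ t ∈ tbox k T, ∑ u ∈ Finset.range (U t), (if goodT z.factorial k t u then (1 : ℝ) else 0) := by
  set Q := z.factorial with hQ
  set S := progSum Q T with hS
  have hS0 : 0 ≤ S := progSum_nonneg Q T
  have h1 : W / 2 * S ^ k ≤ ∑ t ∈ tbox k T, ∑ u ∈ Finset.range (U t), (1 : ℝ) := by
    rw [hS, ← tuple_sum_all Q k T, Finset.mul_sum]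
    refine Finset.sum_le_sum fun t ht => ?_
    simpa using hUl t ht
  have h2 : ∑ t ∈ tbox k T, ∑ u ∈ Finset.range (U t), (1 : ℝ) ≤
      ∑ t ∈ tbox k T, ∑ u ∈ Finset.range (U t), ((if goodT Q k t u then 1 else 0) +
      ∑ i, ∑ j, ∑ g ∈ Finset.Ioc z Y,
        (if i ≠ j then (if g ∣ prog Q (t i) ∧ g ∣ prog Q (t j) then (1 : ℝ) else 0) else 0) +
      ∑ i, ∑ g ∈ Finset.Ioc z Y,
        (if g ∣ prog Q (t i) ∧ g ∣ prog Q u then (1 : ℝ) else 0)) :=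
    Finset.sum_le_sum fun t ht => Finset.sum_le_sum fun u _ => good_cover z k T Y hY t ht u
  have hz0 : (0 : ℝ) < z := by
    have : 0 < z := by omega
    exact_mod_cast this
  have hsq : ∑ g ∈ Finset.Ioc z Y, ((g : ℝ) ^ 2)⁻¹ ≤ (z : ℝ)⁻¹ := by
    have := sum_Ioc_inv_sq_le_sub (α := ℝ) (k := z) (n := Y) (by omega) hzY
    have h3 : (0 : ℝ) ≤ (Y : ℝ)⁻¹ := by positivity
    linarith
  have h3 : ∑ t ∈ tbox k T, ∑ u ∈ Finset.range (U t), ∑ i, ∑ j, ∑ g ∈ Finset.Ioc z Y,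
        (if i ≠ j then (if g ∣ prog Q (t i) ∧ g ∣ prog Q (t j) then (1 : ℝ) else 0) else 0) ≤
        (k * k) * (2 * W * S ^ k * (z : ℝ)⁻¹) := by
    have e1 : ∑ t ∈ tbox k T, ∑ u ∈ Finset.range (U t), ∑ i, ∑ j, ∑ g ∈ Finset.Ioc z Y,
        (if i ≠ j then (if g ∣ prog Q (t i) ∧ g ∣ prog Q (t j) then (1 : ℝ) else 0) else 0) =
        ∑ i, ∑ j, ∑ g ∈ Finset.Ioc z Y, ∑ t ∈ tbox k T, ∑ u ∈ Finset.range (U t),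
        (if i ≠ j then (if g ∣ prog Q (t i) ∧ g ∣ prog Q (t j) then (1 : ℝ) else 0) else 0) := by
      simp_rw [Finset.sum_sigma']
      refine Finset.sum_bij' (fun a _ => ⟨a.2.2.1, a.2.2.2.1, a.2.2.2.2, a.1, a.2.1⟩)
        (fun a _ => ⟨a.2.2.2.1, a.2.2.2.2, a.1, a.2.1, a.2.2.1⟩) ?_ ?_ ?_ ?_ ?_ <;>
        simp +contextual
    rw [e1]
    have e2 : ∀ i j : Fin k, ∑ g ∈ Finset.Ioc z Y, ∑ t ∈ tbox k T, ∑ u ∈ Finset.range (U t),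
        (if i ≠ j then (if g ∣ prog Q (t i) ∧ g ∣ prog Q (t j) then (1 : ℝ) else 0) else 0) ≤
        2 * W * S ^ k * (z : ℝ)⁻¹ := by
      intro i j
      by_cases hij : i ≠ j
      · simp only [if_pos hij]
        refine le_trans (Finset.sum_le_sum fun g hg => bad_pair Q k T g (by have := Finset.mem_Ioc.mp hg; omega) W hW U hU i j hij) ?_
        rw [← Finset.mul_sum]
        exact mul_le_mul_of_nonneg_left hsq (by positivity)
      · simp only [if_neg hij, Finset.sum_const_zero]
        positivity
    refine le_trans (Finset.sum_le_sum fun i _ => Finset.sum_le_sum fun j _ => e2 i j) ?_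
    simp only [Finset.sum_const, Finset.card_univ, Fintype.card_fin, nsmul_eq_mul]
    exact le_of_eq (by ring)
  have h4 : ∑ t ∈ tbox k T, ∑ u ∈ Finset.range (U t), ∑ i, ∑ g ∈ Finset.Ioc z Y,
        (if g ∣ prog Q (t i) ∧ g ∣ prog Q u then (1 : ℝ) else 0) ≤
        k * (2 * W * S ^ k * (z : ℝ)⁻¹) := by
    have e1 : ∑ t ∈ tbox k T, ∑ u ∈ Finset.range (U t), ∑ i, ∑ g ∈ Finset.Ioc z Y,
        (if g ∣ prog Q (t i) ∧ g ∣ prog Q u then (1 : ℝ) else 0) =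
        ∑ i, ∑ g ∈ Finset.Ioc z Y, ∑ t ∈ tbox k T, ∑ u ∈ Finset.range (U t),
        (if g ∣ prog Q (t i) ∧ g ∣ prog Q u then (1 : ℝ) else 0) := by
      simp_rw [Finset.sum_sigma']
      refine Finset.sum_bij' (fun a _ => ⟨a.2.2.1, a.2.2.2, a.1, a.2.1⟩)
        (fun a _ => ⟨a.2.2.1, a.2.2.2, a.1, a.2.1⟩) ?_ ?_ ?_ ?_ ?_ <;>
        simp +contextual
    rw [e1]
    have e2 : ∀ i : Fin k, ∑ g ∈ Finset.Ioc z Y, ∑ t ∈ tbox k T, ∑ u ∈ Finset.range (U t),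
        (if g ∣ prog Q (t i) ∧ g ∣ prog Q u then (1 : ℝ) else 0) ≤
        2 * W * S ^ k * (z : ℝ)⁻¹ := by
      intro i
      refine le_trans (Finset.sum_le_sum fun g hg => bad_last Q k T g Y (by have := Finset.mem_Ioc.mp hg; omega) (Finset.mem_Ioc.mp hg).2 W hW U hU hYW i) ?_
      rw [← Finset.mul_sum]
      exact mul_le_mul_of_nonneg_left hsq (by positivity)
    refine le_trans (Finset.sum_le_sum fun i _ => e2 i) ?_
    simp only [Finset.sum_const, Finset.card_univ, Fintype.card_fin, nsmul_eq_mul]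
    exact le_rfl
  simp only [Finset.sum_add_distrib] at h2
  have h5 : (k * k) * (2 * W * S ^ k * (z : ℝ)⁻¹) + k * (2 * W * S ^ k * (z : ℝ)⁻¹) ≤ W / 4 * S ^ k := by
    have h6 : (8 * (k * k + k) : ℝ) ≤ z := by
      have : 8 * (k * k + k) ≤ z := by omega
      exact_mod_cast this
    have h7 : (8 * (k * k + k) : ℝ) * (z : ℝ)⁻¹ ≤ 1 := by
      rw [← div_eq_mul_inv, div_le_one hz0]; exact h6
    have h8 : 0 ≤ W / 4 * S ^ k := by positivity
    have := mul_le_mul_of_nonneg_left h7 h8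
    linarith
  have h9 : W / 2 * S ^ k = W / 4 * S ^ k + W / 4 * S ^ k := by ring
  linarith

lemma count_core (z k T Y B : ℕ) (hz : 8 * (k * k + k) + 2 ≤ z) (hT : 1 ≤ T) (hY : z.factorial * T = Y)
    (hB : z.factorial * Y ^ (k + 1) ≤ B) :
    ∃ 𝒯 : Finset (Fin (k + 1) → ℕ), (∀ m ∈ 𝒯, (∀ i, 0 < m i) ∧
      (∀ i j, i ≠ j → Nat.Coprime (m i) (m j)) ∧ ∏ i, m i ≤ B) ∧
      (B : ℝ) / z.factorial / 4 * progSum z.factorial T ^ k ≤ 𝒯.card := by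
  classical
  set Q := z.factorial with hQ
  have hQ1 : 1 ≤ Q := Nat.factorial_pos z
  have hQ0 : (0 : ℝ) < Q := by exact_mod_cast hQ1
  have hzQ : z ≤ Q := Nat.self_le_factorial z
  have hzY : z ≤ Y := by rw [← hY]; nlinarith
  let P : (Fin k → ℕ) → ℕ := fun t => ∏ i, prog Q (t i)
  have hP0 : ∀ t, 0 < P t := fun t => Finset.prod_pos fun i _ => prog_pos Q _
  have hPY : ∀ t ∈ tbox k T, P t ≤ Y ^ k := by
    intro t ht
    have : P t ≤ ∏ i : Fin k, Y := by
      refine Finset.prod_le_prod' fun i _ => ?_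
      have := Finset.mem_range.mp (Fintype.mem_piFinset.mp ht i)
      unfold prog
      rw [← hY]
      nlinarith
    simpa using this
  let U : (Fin k → ℕ) → ℕ := fun t => B / (P t * Q)
  have hw : ∀ t, (B : ℝ) / Q * ∏ i, ((prog Q (t i) : ℝ))⁻¹ = (B : ℝ) / ((P t * Q : ℕ) : ℝ) := by
    intro t
    simp only [P]
    push_cast
    rw [Finset.prod_inv_distrib]
    have : (∏ i, (prog Q (t i) : ℝ)) ≠ 0 := by
      have := hP0 t
      have h2 : (0 : ℝ) < (P t : ℕ) := by exact_mod_cast this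
      simp only [P] at h2
      push_cast at h2
      exact h2.ne'
    field_simp
  have hYW : ∀ t ∈ tbox k T, (Y : ℝ) ≤ (B : ℝ) / ((P t * Q : ℕ) : ℝ) := by
    intro t ht
    have hpos : (0 : ℝ) < ((P t * Q : ℕ) : ℝ) := by
      exact_mod_cast Nat.mul_pos (hP0 t) hQ1
    rw [le_div_iff₀ hpos]
    have : Y * (P t * Q) ≤ B := by
      calc Y * (P t * Q) ≤ Y * (Y ^ k * Q) := by gcongr; exact hPY t ht
        _ = Q * Y ^ (k + 1) := by ring
        _ ≤ B := hB
    exact_mod_cast this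
  have hg := good_count z k T Y hz hY hzY ((B : ℝ) / Q) (by positivity) U
    (by intro t ht; rw [hw]; exact Nat.cast_div_le)
    (by
      intro t ht
      have h1 := hYW t ht
      have h2 : (B : ℝ) / ((P t * Q : ℕ) : ℝ) < (U t : ℝ) + 1 := by
        have := Nat.lt_div_mul_add (a := B) (Nat.mul_pos (hP0 t) hQ1)
        have hpos : (0 : ℝ) < ((P t * Q : ℕ) : ℝ) := by
          exact_mod_cast Nat.mul_pos (hP0 t) hQ1
        rw [div_lt_iff₀ hpos]
        have h3 : B < (U t + 1) * (P t * Q) := by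
          simp only [U]; linarith
        exact_mod_cast h3
      have h4 : (2 : ℝ) ≤ Y := by
        have : 2 ≤ Y := by omega
        exact_mod_cast this
      have h5 := hw t
      have h6 : (B : ℝ) / Q / 2 * ∏ i, ((prog Q (t i) : ℝ))⁻¹ = (B : ℝ) / ((P t * Q : ℕ) : ℝ) / 2 := by
        rw [← h5]; ring
      rw [h6]
      linarith)
    (by intro t ht; rw [hw]; exact hYW t ht)
  let F : (Σ _ : Fin k → ℕ, ℕ) → (Fin (k + 1) → ℕ) := fun a => Fin.cons (prog Q a.2) (fun i => prog Q (a.1 i))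
  let G := ((tbox k T).sigma (fun t => Finset.range (U t))).filter (fun a => goodT Q k a.1 a.2)
  have hpinj : ∀ a b, prog Q a = prog Q b → a = b := by
    intro a b h
    unfold prog at h
    exact Nat.eq_of_mul_eq_mul_left hQ1 (by omega)
  refine ⟨G.image F, ?_, ?_⟩
  · intro m hm
    obtain ⟨⟨t, u⟩, ha, rfl⟩ := Finset.mem_image.mp hm
    obtain ⟨ha1, ha2⟩ := Finset.mem_filter.mp ha
    obtain ⟨ht, hu⟩ := Finset.mem_sigma.mp ha1
    simp only at ht hu ha2
    refine ⟨?_, ?_, ?_⟩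
    · intro i
      refine Fin.cases ?_ (fun i => ?_) i
      · exact prog_pos Q _
      · exact prog_pos Q _
    · intro i j
      refine Fin.cases ?_ (fun i => ?_) i <;> refine Fin.cases ?_ (fun j => ?_) j
      · intro h; exact absurd rfl h
      · intro _; exact (ha2.2 j).symm
      · intro _; exact ha2.2 i
      · intro h; exact ha2.1 i j (fun h' => h (by rw [h']))
    · rw [Fin.prod_univ_succ]
      simp only [F, Fin.cons_zero, Fin.cons_succ]
      have h1 : u + 1 ≤ B / (P t * Q) := Finset.mem_range.mp hu
      rw [Nat.le_div_iff_mul_le (Nat.mul_pos (hP0 t) hQ1)] at h1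
      have h2 : prog Q u ≤ (u + 1) * Q := by unfold prog; nlinarith
      calc prog Q u * P t ≤ ((u + 1) * Q) * P t := by gcongr
        _ = (u + 1) * (P t * Q) := by ring
        _ ≤ B := h1
  · rw [Finset.card_image_of_injective]
    · refine hg.trans (le_of_eq ?_)
      rw [← Finset.sum_sigma (f := fun a : (Σ _ : Fin k → ℕ, ℕ) => if goodT Q k a.1 a.2 then (1 : ℝ) else 0), Finset.sum_boole]
    · rintro ⟨t, u⟩ ⟨t', u'⟩ h
      have h0 : prog Q u = prog Q u' := by simpa [F] using congrFun h 0
      have h1 : ∀ i, prog Q (t i) = prog Q (t' i) := fun i => by simpa [F] using congrFun h i.succ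
      have e0 := hpinj _ _ h0
      have e1 : t = t' := funext fun i => hpinj _ _ (h1 i)
      subst e0 e1
      rfl

lemma count_lower (k : ℕ) : ∃ c : ℝ, 0 < c ∧ ∀ᶠ B : ℕ in Filter.atTop,
    ∃ 𝒯 : Finset (Fin (k + 1) → ℕ), (∀ m ∈ 𝒯, (∀ i, 0 < m i) ∧
      (∀ i j, i ≠ j → Nat.Coprime (m i) (m j)) ∧ ∏ i, m i ≤ B) ∧
      c * ((B : ℝ) * Real.log B ^ k) ≤ 𝒯.card := by
  set z := 8 * (k * k + k) + 2 with hz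
  set Q := z.factorial with hQ
  have hQ1 : 1 ≤ Q := Nat.factorial_pos z
  have hQ0 : (0 : ℝ) < Q := by exact_mod_cast hQ1
  set M := 2 * k + 2 with hM
  have hM0 : M ≠ 0 := by omega
  refine ⟨1 / Q / 4 * (1 / (M * Q)) ^ k, by positivity, ?_⟩
  filter_upwards [Filter.eventually_ge_atTop ((Q ^ (k + 2)) ^ M)] with B hB
  obtain ⟨T, hT1, hT2⟩ : ∃ T, T ^ M ≤ B ∧ B < (T + 1) ^ M := by
    have hex : ∃ s, B < (s + 1) ^ M := ⟨B, lt_of_lt_of_le (Nat.lt_succ_self B) (Nat.le_self_pow hM0 _)⟩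
    classical
    refine ⟨Nat.find hex, ?_, Nat.find_spec hex⟩
    rcases Nat.eq_zero_or_pos (Nat.find hex) with h | h
    · rw [h, zero_pow hM0]; omega
    · have := Nat.find_min hex (Nat.sub_lt h one_pos)
      rw [Nat.sub_add_cancel (show 1 ≤ _ from h)] at this
      omega
  have hTQ : Q ^ (k + 2) ≤ T := by
    have := lt_of_le_of_lt hB hT2
    have := lt_of_pow_lt_pow_left₀ M (by omega) this
    omega
  have hT : 1 ≤ T := le_trans (Nat.one_le_pow _ _ hQ1) hTQ
  have hB0 : (1 : ℝ) ≤ B := by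
    have : 1 ≤ B := le_trans (Nat.one_le_pow _ _ hT) hT1
    exact_mod_cast this
  obtain ⟨𝒯, h1, h2⟩ := count_core z k T (Q * T) B le_rfl hT rfl (by
    calc Q * (Q * T) ^ (k + 1) = Q ^ (k + 2) * T ^ (k + 1) := by ring
      _ ≤ T * T ^ (k + 1) := by gcongr
      _ = T ^ (k + 2) := by ring
      _ ≤ T ^ M := Nat.pow_le_pow_right hT (by omega)
      _ ≤ B := hT1)
  refine ⟨𝒯, h1, le_trans ?_ h2⟩
  have h3 := progSum_ge Q hQ1 T
  have h4 : Real.log B ≤ M * Real.log (T + 1) := by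
    rw [← Real.log_pow]
    refine Real.log_le_log (by linarith) ?_
    exact_mod_cast hT2.le
  have hMp : (0 : ℝ) < M := by positivity
  have h5 : 1 / (M * Q) * Real.log B ≤ progSum Q T := by
    refine le_trans ?_ h3
    rw [div_mul_eq_mul_div, one_mul, div_le_div_iff₀ (by positivity) hQ0]
    nlinarith
  have h6 : 0 ≤ Real.log B := Real.log_nonneg hB0
  have h7 : (1 / (M * Q) * Real.log B) ^ k ≤ progSum Q T ^ k := by
    gcongr
  calc 1 / Q / 4 * (1 / (M * Q)) ^ k * ((B : ℝ) * Real.log B ^ k)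
      = B / Q / 4 * (1 / (M * Q) * Real.log B) ^ k := by rw [mul_pow]; ring
    _ ≤ _ := by gcongr


lemma crt_int {ι : Type*} [Fintype ι] (m : ι → ℕ) (hm : ∀ i j, i ≠ j → Nat.Coprime (m i) (m j)) (c : ι → ℤ) :
    ∃ x : ℤ, ∀ i, (m i : ℤ) ∣ x - c i := by
  have hc : Pairwise (Function.onFun Nat.Coprime m) := fun i j h => hm i j h
  obtain ⟨b, hb⟩ := (ZMod.prodEquivPi m hc).surjective (fun i => (c i : ZMod (m i)))
  obtain ⟨x, rfl⟩ := ZMod.intCast_surjective b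
  refine ⟨x, fun i => ?_⟩
  rw [map_intCast] at hb
  have := congrFun hb i
  rw [← ZMod.intCast_zmod_eq_zero_iff_dvd] 
  push_cast
  rw [← this]
  simp

/-- pairs of indices -/
abbrev EdgeT (n : ℕ) : Type := Σ j : Fin n, Fin j.val

def eHi {n : ℕ} (e : EdgeT n) : Fin n := e.1
def eLo {n : ℕ} (e : EdgeT n) : Fin n := Fin.castLE e.1.2.le e.2

lemma eLo_lt {n : ℕ} (e : EdgeT n) : eLo e < eHi e := by
  rw [Fin.lt_def]; exact e.2.2

lemma edge_ext {n : ℕ} {e e' : EdgeT n} (h1 : eHi e = eHi e') (h2 : eLo e = eLo e') : e = e' := by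
  obtain ⟨j, i⟩ := e
  obtain ⟨j', i'⟩ := e'
  simp only [eHi] at h1
  subst h1
  congr 1
  have := congrArg Fin.val h2
  exact Fin.ext this

lemma card_edge (n : ℕ) : Fintype.card (EdgeT n) = n * (n - 1) / 2 := by
  rw [Fintype.card_sigma]
  simp only [Fintype.card_fin]
  rw [Fin.sum_univ_eq_sum_range (fun i => i), Finset.sum_range_id]

/-- the congruence subring -/
def congRing {n : ℕ} (m : EdgeT n → ℕ) : Subring (Fin n → ℤ) where
  carrier := {x | ∀ e, (m e : ℤ) ∣ x (eHi e) - x (eLo e)}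
  mul_mem' := by
    intro x y hx hy e
    have : (x * y) (eHi e) - (x * y) (eLo e) =
      x (eHi e) * (y (eHi e) - y (eLo e)) + (x (eHi e) - x (eLo e)) * y (eLo e) := by
      simp only [Pi.mul_apply]; ring
    rw [this]
    exact dvd_add ((hy e).mul_left _) ((hx e).mul_right _)
  one_mem' := by intro e; simp
  add_mem' := by
    intro x y hx hy e
    have : (x + y) (eHi e) - (x + y) (eLo e) =
      (x (eHi e) - x (eLo e)) + (y (eHi e) - y (eLo e)) := by
      simp only [Pi.add_apply]; ring
    rw [this]
    exact dvd_add (hx e) (hy e)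
  zero_mem' := by intro e; simp
  neg_mem' := by
    intro x hx e
    have : (-x) (eHi e) - (-x) (eLo e) = -(x (eHi e) - x (eLo e)) := by
      simp only [Pi.neg_apply]; ring
    rw [this]
    exact (hx e).neg_right

lemma mem_congRing {n : ℕ} (m : EdgeT n → ℕ) (x : Fin n → ℤ) :
    x ∈ congRing m ↔ ∀ e, (m e : ℤ) ∣ x (eHi e) - x (eLo e) := Iff.rfl

/-- the difference map -/
def edgeDiff {n : ℕ} (m : EdgeT n → ℕ) : (Fin n → ℤ) →+ (∀ e, ZMod (m e)) where
  toFun x e := ((x (eHi e) - x (eLo e) : ℤ) : ZMod (m e))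
  map_zero' := by ext e; simp
  map_add' := by intro x y; ext e; simp only [Pi.add_apply]; push_cast; ring

lemma congRing_index {n : ℕ} (m : EdgeT n → ℕ) (hm : ∀ i j, i ≠ j → Nat.Coprime (m i) (m j)) :
    (congRing m).toAddSubgroup.index = ∏ e, m e := by
  classical
  have h1 : (congRing m).toAddSubgroup = (edgeDiff m).ker := by
    ext x
    rw [AddMonoidHom.mem_ker]
    change (∀ e, (m e : ℤ) ∣ x (eHi e) - x (eLo e)) ↔ _
    rw [funext_iff]
    refine forall_congr' fun e => ?_
    rw [← ZMod.intCast_zmod_eq_zero_iff_dvd]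
    rfl
  have hs : Function.Surjective (edgeDiff m) := by
    intro c
    have : ∀ i : Fin n, ∃ x : ℤ, ∀ e, (m e : ℤ) ∣ x - (if eHi e = i then (c e).valMinAbs else 0) :=
      fun i => crt_int m hm _
    choose x hx using this
    refine ⟨x, ?_⟩
    ext e
    change ((x (eHi e) - x (eLo e) : ℤ) : ZMod (m e)) = c e
    have h2 := hx (eHi e) e
    have h3 := hx (eLo e) e
    rw [if_pos rfl] at h2
    rw [if_neg (eLo_lt e).ne', sub_zero] at h3
    rw [← ZMod.intCast_zmod_eq_zero_iff_dvd] at h2 h3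
    push_cast at h2 h3 ⊢
    rw [h3, sub_zero]
    rw [sub_eq_zero] at h2
    rw [h2]
  rw [h1, AddSubgroup.index_ker, AddMonoidHom.range_eq_top.mpr hs]
  rw [Nat.card_congr AddSubgroup.topEquiv.toEquiv, Nat.card_pi]
  simp

lemma congRing_dvd {n : ℕ} (m m' : EdgeT n → ℕ) (hm : ∀ i j, i ≠ j → Nat.Coprime (m i) (m j))
    (h : congRing m ≤ congRing m') (e : EdgeT n) : m' e ∣ m e := by
  classical
  let c : {e' : EdgeT n // e' ≠ e} → ℤ := fun e' =>
    if eHi e'.1 = eLo e ∨ eLo e'.1 = eLo e then (m e : ℤ) else 0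
  obtain ⟨a, ha⟩ := crt_int (fun e' : {e' : EdgeT n // e' ≠ e} => m e'.1)
    (fun i j hij => hm _ _ (fun h' => hij (Subtype.ext h'))) c
  let x : Fin n → ℤ := fun i => if i = eHi e then a else if i = eLo e then a - m e else 0
  have hlt := eLo_lt e
  have hx : x ∈ congRing m := by
    rw [mem_congRing]
    intro e'
    have hlt' := eLo_lt e'
    by_cases he : e' = e
    · subst he
      simp [x, hlt.ne]
    · have h1 := ha ⟨e', he⟩
      simp only [c] at h1
      have hne : ¬ (eHi e' = eHi e ∧ eLo e' = eLo e) := fun h2 => he (edge_ext h2.1 h2.2)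
      simp only [x]
      by_cases p1 : eHi e' = eHi e
      · have p2 : eLo e' ≠ eLo e := fun h2 => hne ⟨p1, h2⟩
        have p3 : eLo e' ≠ eHi e := by rw [← p1]; exact hlt'.ne
        have p4 : eHi e' ≠ eLo e := by rw [p1]; exact hlt.ne'
        rw [if_neg (by tauto)] at h1
        rw [if_pos p1, if_neg p3, if_neg p2]
        exact h1
      · rw [if_neg p1]
        by_cases p2 : eHi e' = eLo e
        · have p3 : eLo e' ≠ eHi e := by
            intro h2
            rw [h2, p2] at hlt'
            exact absurd hlt' (not_lt.mpr hlt.le)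
          have p4 : eLo e' ≠ eLo e := by rw [← p2]; exact hlt'.ne
          rw [if_pos (by tauto)] at h1
          rw [if_pos p2, if_neg p3, if_neg p4, sub_zero]
          exact h1
        · rw [if_neg p2]
          by_cases p3 : eLo e' = eHi e
          · have p4 : eLo e' ≠ eLo e := by rw [p3]; exact hlt.ne'
            rw [if_neg (by tauto)] at h1
            rw [if_pos p3, zero_sub]
            rw [sub_zero] at h1
            exact h1.neg_right
          · rw [if_neg p3]
            by_cases p4 : eLo e' = eLo e
            · rw [if_pos (by tauto)] at h1
              rw [if_pos p4, zero_sub]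
              exact h1.neg_right
            · rw [if_neg p4]; simp
  have h2 := (mem_congRing m' x).mp (h hx) e
  simp only [x, if_pos, if_neg hlt.ne] at h2
  have h3 : a - (a - (m e : ℤ)) = m e := by ring
  rw [h3] at h2
  exact_mod_cast h2

lemma congRing_inj {n : ℕ} (m m' : EdgeT n → ℕ) (hm : ∀ i j, i ≠ j → Nat.Coprime (m i) (m j))
    (hm' : ∀ i j, i ≠ j → Nat.Coprime (m' i) (m' j)) (h : congRing m = congRing m') : m = m' :=
  funext fun e => Nat.dvd_antisymm (congRing_dvd m' m hm' h.ge e) (congRing_dvd m m' hm h.le e)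

lemma card_le_count (n B : ℕ) (𝒯 : Finset (EdgeT n → ℕ))
    (h𝒯 : ∀ m ∈ 𝒯, (∀ i, 0 < m i) ∧ (∀ i j, i ≠ j → Nat.Coprime (m i) (m j)) ∧ ∏ i, m i ≤ B) :
    𝒯.card ≤ subringCountUpTo n B := by
  classical
  have h1 : ∀ m ∈ 𝒯, ∏ e, m e ∈ Finset.Icc 1 B := fun m hm =>
    Finset.mem_Icc.mpr ⟨Finset.prod_pos fun i _ => (h𝒯 m hm).1 i, (h𝒯 m hm).2.2⟩
  rw [Finset.card_eq_sum_card_fiberwise (f := fun m : EdgeT n → ℕ => ∏ e, m e) (s := 𝒯) (t := Finset.Icc 1 B) (fun m hm => h1 m hm), subringCountUpTo]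
  refine Finset.sum_le_sum fun r hr => ?_
  have hfin := finite_subrings n r (Finset.mem_Icc.mp hr).1
  have hmem : ∀ m : {m // m ∈ 𝒯.filter (fun m => ∏ e, m e = r)}, (congRing m.1).toAddSubgroup.index = r := by
    intro m
    obtain ⟨h2, h3⟩ := Finset.mem_filter.mp m.2
    rw [congRing_index m.1 (h𝒯 m.1 h2).2.1, h3]
  let φ : {m // m ∈ 𝒯.filter (fun m => ∏ e, m e = r)} → {R : Subring (Fin n → ℤ) // R.toAddSubgroup.index = r} :=
    fun m => ⟨congRing m.1, hmem m⟩
  have hφ : Function.Injective φ := by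
    intro m m' h
    have h2 : congRing m.1 = congRing m'.1 := congrArg Subtype.val h
    exact Subtype.ext (congRing_inj _ _ (h𝒯 _ (Finset.mem_filter.mp m.2).1).2.1
      (h𝒯 _ (Finset.mem_filter.mp m'.2).1).2.1 h2)
  have := Nat.card_le_card_of_injective φ hφ
  rw [subringCount]
  rw [Nat.card_eq_fintype_card, Fintype.card_coe] at this
  exact this

lemma lower_bound (n : ℕ) (hn : 6 ≤ n) : ∃ c : ℝ, 0 < c ∧ ∀ᶠ B : ℕ in Filter.atTop,
    c * ((B : ℝ) * Real.log B ^ (n * (n - 1) / 2 - 1)) ≤ (subringCountUpTo n B : ℝ) := by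
  classical
  have h2 : 1 ≤ n * (n - 1) / 2 := by
    rw [Nat.le_div_iff_mul_le (by norm_num)]
    have : 5 ≤ n - 1 := by omega
    nlinarith
  obtain ⟨c, hc, h⟩ := count_lower (n * (n - 1) / 2 - 1)
  refine ⟨c, hc, ?_⟩
  filter_upwards [h] with B hB
  obtain ⟨𝒯, h3, h4⟩ := hB
  refine h4.trans ?_
  have hcard : Fintype.card (EdgeT n) = n * (n - 1) / 2 - 1 + 1 := by rw [card_edge]; omega
  let σ : EdgeT n ≃ Fin (n * (n - 1) / 2 - 1 + 1) := Fintype.equivFinOfCardEq hcard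
  let 𝒯' : Finset (EdgeT n → ℕ) := 𝒯.image (fun m e => m (σ e))
  have h5 : 𝒯'.card = 𝒯.card := by
    refine Finset.card_image_of_injective _ fun m m' h => ?_
    ext i
    have := congrFun h (σ.symm i)
    simpa using this
  rw [← h5]
  have := card_le_count n B 𝒯' (by
    intro m' hm'
    obtain ⟨m, hm, rfl⟩ := Finset.mem_image.mp hm'
    obtain ⟨q1, q2, q3⟩ := h3 m hm
    refine ⟨fun e => q1 _, fun i j hij => q2 _ _ (fun h => hij (σ.injective h)), ?_⟩
    rw [Equiv.prod_comp σ m]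
    exact q3)
  exact_mod_cast this

theorem subring_asymptotics_large_n (n : ℕ) (hn : 6 ≤ n) (ε : ℝ) (hε : 0 < ε) :
    ∃ c Cε : ℝ, 0 < c ∧ 0 < Cε ∧
      ∀ᶠ B : ℕ in Filter.atTop,
        c * ((B : ℝ) * Real.log B ^ (n * (n - 1) / 2 - 1)) ≤ (subringCountUpTo n B : ℝ) ∧
        (subringCountUpTo n B : ℝ) ≤ Cε * (B : ℝ) ^ ((n : ℝ) / 2 - 7 / 6 + ε) := by
  obtain ⟨c, hc, h1⟩ := lower_bound n hn
  obtain ⟨C, hC, h2⟩ := upper_bound n hn ε hε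
  refine ⟨c, C, hc, hC, ?_⟩
  filter_upwards [h1] with B hB
  exact ⟨hB, h2 B⟩
end

section
/- For all natural numbers n ≥ 1, k ≥ 0 and r ≥ 1: φ_{n+k,k}(r) = S(n+k+1, n+1) · φ_n(r), where S(u,v) denotes the Stirling number of the second kind, i.e., the number of partitions of a set with u elements into v nonempty subsets. -/
/-- A sublattice of `ℤ^n` is multiplicative if it is closed under componentwise
multiplication. -/
def IsMulClosed {n : ℕ} (L : Submodule ℤ (Fin n → ℤ)) : Prop :=
  ∀ u ∈ L, ∀ v ∈ L, u * v ∈ L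

/-- `phi n r` is the number of multiplicative sublattices of `ℤ^n` of full rank `n`
and index `r`. -/
noncomputable def phi (n r : ℕ) : ℕ :=
  Nat.card {L : Submodule ℤ (Fin n → ℤ) //
    IsMulClosed L ∧ Module.finrank ℤ L = n ∧ L.toAddSubgroup.index = r}

/-- `phiCorank m k r` is the number of multiplicative sublattices of `ℤ^m` of co-rank `k`
whose quotient has torsion subgroup of cardinality `r`. -/
noncomputable def phiCorank (m k r : ℕ) : ℕ :=
  Nat.card {L : Submodule ℤ (Fin m → ℤ) //
    IsMulClosed L ∧ Module.finrank ℤ L = m - k ∧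
    Nat.card (Submodule.torsion ℤ ((Fin m → ℤ) ⧸ L)) = r}

/-- The Stirling number of the second kind: the number of partitions of a set with `u`
elements into `v` nonempty parts. -/
noncomputable def stirlingSecond (u v : ℕ) : ℕ :=
  Nat.card {S : Finset (Finset (Fin u)) //
    S.card = v ∧ (∀ t ∈ S, t.Nonempty) ∧ ∀ a, ∃! t, t ∈ S ∧ a ∈ t}

/-- extension by zero at the new point `0` -/
def hat {m : ℕ} (v : Fin m → ℤ) : Fin (m + 1) → ℤ := Fin.cons 0 v

lemma hat_zero {m : ℕ} (v : Fin m → ℤ) : hat v 0 = 0 := rfl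

lemma hat_succ {m : ℕ} (v : Fin m → ℤ) (i : Fin m) : hat v i.succ = v i := rfl

lemma hat_add {m : ℕ} (v w : Fin m → ℤ) (a) : hat (v + w) a = hat v a + hat w a := by
  refine Fin.cases ?_ (fun i => ?_) a <;> simp [hat]

lemma hat_smul {m : ℕ} (c : ℤ) (w : Fin m → ℤ) (a) : hat (c • w) a = c * hat w a := by
  refine Fin.cases ?_ (fun i => ?_) a <;> simp [hat]

lemma hat_mul {m : ℕ} (v w : Fin m → ℤ) (a) : hat (v * w) a = hat v a * hat w a := by
  refine Fin.cases ?_ (fun i => ?_) a <;> simp [hat]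

/-- pullback along `f` -/
def iota {m c : ℕ} (f : Fin (m + 1) → Fin (c + 1)) : (Fin c → ℤ) →ₗ[ℤ] (Fin m → ℤ) where
  toFun w := fun i => hat w (f i.succ)
  map_add' v w := by ext i; simp [hat_add]
  map_smul' a w := by ext i; exact hat_smul a w _

lemma iota_apply {m c : ℕ} (f : Fin (m + 1) → Fin (c + 1)) (w : Fin c → ℤ) (i : Fin m) :
    iota f w i = hat w (f i.succ) := rfl

lemma hat_iota {m c : ℕ} (f : Fin (m + 1) → Fin (c + 1)) (h0 : f 0 = 0) (w : Fin c → ℤ) (a) :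
    hat (iota f w) a = hat w (f a) := by
  refine Fin.cases ?_ (fun i => ?_) a
  · rw [h0]; rfl
  · rfl

lemma iota_mul {m c : ℕ} (f : Fin (m + 1) → Fin (c + 1)) (v w : Fin c → ℤ) :
    iota f (v * w) = iota f v * iota f w := by
  ext i; simp [iota_apply, hat_mul]

lemma iota_inj {m c : ℕ} (f : Fin (m + 1) → Fin (c + 1)) (h0 : f 0 = 0)
    (hf : Function.Surjective f) : Function.Injective (iota f) := by
  intro v w h
  ext i
  obtain ⟨a, ha⟩ := hf i.succ
  have := congrArg (fun u => hat u a) h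
  simpa only [hat_iota f h0, ha, hat_succ] using this

lemma mem_range_iota {m c : ℕ} (f : Fin (m + 1) → Fin (c + 1)) (h0 : f 0 = 0)
    (hf : Function.Surjective f) (y : Fin m → ℤ)
    (hy : ∀ a b, f a = f b → hat y a = hat y b) : ∃ w, iota f w = y := by
  choose g hg using hf
  refine ⟨fun i => hat y (g i.succ), ?_⟩
  ext i
  rw [iota_apply, ← hat_succ y i]
  generalize i.succ = a
  have key : ∀ b : Fin (c + 1), f a = b → hat (fun i => hat y (g i.succ)) b = hat y a := by
    intro b
    refine Fin.cases ?_ (fun j => ?_) b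
    · intro h
      rw [hat_zero, ← hat_zero y]
      exact hy _ _ (by rw [h0, h])
    · intro h
      rw [hat_succ]
      exact hy _ _ (by rw [hg, h])
  exact key _ rfl

/-- the torsion count -/
lemma card_torsion {m c : ℕ} (f : Fin (m + 1) → Fin (c + 1)) (h0 : f 0 = 0)
    (hf : Function.Surjective f) (L : Submodule ℤ (Fin c → ℤ)) (N : ℤ) (hN : N ≠ 0)
    (hL : ∀ x, N • x ∈ L) :
    Nat.card (Submodule.torsion ℤ ((Fin m → ℤ) ⧸ L.map (iota f))) = L.toAddSubgroup.index := by
  let φ : ((Fin c → ℤ) ⧸ L) →ₗ[ℤ] ((Fin m → ℤ) ⧸ L.map (iota f)) :=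
    L.mapQ (L.map (iota f)) (iota f) (Submodule.le_comap_map _ _)
  have hφ : Function.Injective φ := by
    rw [← LinearMap.ker_eq_bot, LinearMap.ker_eq_bot']
    intro q
    obtain ⟨x, rfl⟩ := Submodule.Quotient.mk_surjective _ q
    intro h
    rw [Submodule.mapQ_apply, Submodule.Quotient.mk_eq_zero] at h
    obtain ⟨x', hx', he⟩ := h
    rw [Submodule.Quotient.mk_eq_zero, ← iota_inj f h0 hf he]
    exact hx'
  have hr : Set.range φ = (Submodule.torsion ℤ ((Fin m → ℤ) ⧸ L.map (iota f)) : Set _) := by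
    ext q
    constructor
    · rintro ⟨q, rfl⟩
      obtain ⟨x, rfl⟩ := Submodule.Quotient.mk_surjective _ q
      rw [SetLike.mem_coe, Submodule.mem_torsion_iff]
      refine ⟨⟨N, mem_nonZeroDivisors_of_ne_zero hN⟩, ?_⟩
      rw [Submonoid.smul_def]
      change N • φ (Submodule.Quotient.mk x) = 0
      rw [← map_smul, ← Submodule.Quotient.mk_smul, (Submodule.Quotient.mk_eq_zero _).2 (hL x),
        map_zero]
    · intro h
      obtain ⟨y, rfl⟩ := Submodule.Quotient.mk_surjective _ q
      rw [SetLike.mem_coe, Submodule.mem_torsion_iff] at h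
      obtain ⟨⟨a, ha⟩, h⟩ := h
      have ha' := nonZeroDivisors.ne_zero ha
      rw [Submonoid.smul_def] at h
      change a • (Submodule.Quotient.mk y : (Fin m → ℤ) ⧸ L.map (iota f)) = 0 at h
      rw [← Submodule.Quotient.mk_smul, Submodule.Quotient.mk_eq_zero] at h
      obtain ⟨w, hw, he⟩ := h
      obtain ⟨z, hz⟩ := mem_range_iota f h0 hf y (by
        intro p q hpq
        have h1 := hat_iota f h0 w p
        have h2 := hat_iota f h0 w q
        rw [he, hat_smul] at h1 h2
        rw [← hpq, ← h1] at h2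
        exact (mul_left_cancel₀ ha' h2).symm)
      refine ⟨Submodule.Quotient.mk z, ?_⟩
      rw [Submodule.mapQ_apply, hz]
  have h1 := Nat.card_range_of_injective hφ
  rw [hr] at h1
  exact h1

lemma finrank_full {c : ℕ} (L : Submodule ℤ (Fin c → ℤ)) (N : ℤ) (hN : N ≠ 0)
    (hL : ∀ x, N • x ∈ L) : Module.finrank ℤ L = c := by
  apply le_antisymm
  · simpa using Submodule.finrank_le L
  · let ψ : (Fin c → ℤ) →ₗ[ℤ] L := (N • LinearMap.id).codRestrict L (fun x => hL x)
    have : Function.Injective ψ := by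
      intro x y h
      have h' : N • x = N • y := congrArg Subtype.val h
      exact smul_right_injective _ hN h'
    simpa using LinearMap.finrank_le_finrank_of_injective this

lemma finrank_map_iota {m c : ℕ} (f : Fin (m + 1) → Fin (c + 1)) (h0 : f 0 = 0)
    (hf : Function.Surjective f) (L : Submodule ℤ (Fin c → ℤ)) :
    Module.finrank ℤ (L.map (iota f)) = Module.finrank ℤ L :=
  (LinearEquiv.finrank_eq (Submodule.equivMapOfInjective _ (iota_inj f h0 hf) L)).symm

/-- separating multiplicative lattices have full rank -/
lemma exists_single {c : ℕ} (L : Submodule ℤ (Fin c → ℤ)) (hm : IsMulClosed L)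
    (hs : ∀ a b, a ≠ b → ∃ v ∈ L, hat v a ≠ hat v b) (i : Fin c) :
    ∃ d : ℤ, d ≠ 0 ∧ Pi.single i d ∈ L := by
  have key : ∀ s : Finset (Fin c), i ∉ s → ∃ u ∈ L, u i ≠ 0 ∧ ∀ j ∈ s, u j = 0 := by
    intro s
    induction s using Finset.induction_on with
    | empty =>
      intro _
      obtain ⟨v, hv, h⟩ := hs i.succ 0 (Fin.succ_ne_zero i)
      exact ⟨v, hv, by simpa [hat_succ, hat_zero] using h, by simp⟩
    | insert j s hj ih =>
      intro hi
      rw [Finset.mem_insert, not_or] at hi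
      obtain ⟨u, hu, hui, hus⟩ := ih hi.2
      obtain ⟨v, hv, h⟩ := hs j.succ i.succ (fun h => hi.1 (Fin.succ_injective _ h).symm)
      rw [hat_succ, hat_succ] at h
      refine ⟨v j • u - u * v, L.sub_mem (L.smul_mem _ hu) (hm _ hu _ hv), ?_, ?_⟩
      · have : (v j • u - u * v) i = u i * (v j - v i) := by simp; ring
        rw [this]
        exact mul_ne_zero hui (sub_ne_zero.2 h)
      · intro l hl
        rcases Finset.mem_insert.1 hl with rfl | hl
        · simp [mul_comm]
        · simp [hus l hl]
  obtain ⟨u, hu, hui, h⟩ := key (Finset.univ.erase i) (by simp)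
  refine ⟨u i, hui, ?_⟩
  convert hu using 1
  ext j
  by_cases hj : j = i
  · subst hj; simp
  · rw [Pi.single_eq_of_ne hj, h j (by simp [hj])]

lemma exists_full {c : ℕ} (L : Submodule ℤ (Fin c → ℤ)) (hm : IsMulClosed L)
    (hs : ∀ a b, a ≠ b → ∃ v ∈ L, hat v a ≠ hat v b) :
    ∃ N : ℤ, N ≠ 0 ∧ ∀ x, N • x ∈ L := by
  choose d hd hL using exists_single L hm hs
  refine ⟨∏ i, d i, Finset.prod_ne_zero_iff.2 (fun i _ => hd i), fun x => ?_⟩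
  rw [← Finset.univ_sum_single x, Finset.smul_sum]
  refine L.sum_mem fun i _ => ?_
  obtain ⟨e, he⟩ := Finset.dvd_prod_of_mem d (Finset.mem_univ i)
  have : (∏ i, d i) • (Pi.single i (x i) : Fin c → ℤ) = (e * x i) • Pi.single i (d i) := by
    rw [← Pi.single_smul, ← Pi.single_smul, he]
    congr 1
    simp; ring
  rw [this]
  exact L.smul_mem _ (hL i)

/-- `P` is a set partition -/
def IsPart {u : ℕ} (P : Finset (Finset (Fin u))) : Prop :=
  (∀ t ∈ P, t.Nonempty) ∧ ∀ a, ∃! t, t ∈ P ∧ a ∈ t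

lemma part_ext {u : ℕ} (P Q : Finset (Finset (Fin u))) (hP : IsPart P) (hQ : IsPart Q)
    (h : ∀ a b, (∃ t ∈ P, a ∈ t ∧ b ∈ t) ↔ (∃ t ∈ Q, a ∈ t ∧ b ∈ t)) : P = Q := by
  have key : ∀ P Q : Finset (Finset (Fin u)), IsPart P → IsPart Q →
      (∀ a b, (∃ t ∈ P, a ∈ t ∧ b ∈ t) ↔ (∃ t ∈ Q, a ∈ t ∧ b ∈ t)) → P ⊆ Q := by
    intro P Q hP hQ h t ht
    obtain ⟨a, ha⟩ := hP.1 t ht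
    obtain ⟨s, ⟨hs, has⟩, hsu⟩ := hQ.2 a
    have : t = s := by
      ext b
      constructor
      · intro hb
        obtain ⟨s', hs', h1, h2⟩ := (h a b).1 ⟨t, ht, ha, hb⟩
        rw [← hsu s' ⟨hs', h1⟩]; exact h2
      · intro hb
        obtain ⟨t', ht', h1, h2⟩ := (h a b).2 ⟨s, hs, has, hb⟩
        rw [(hP.2 a).unique ⟨ht, ha⟩ ⟨ht', h1⟩]; exact h2
    rw [this]; exact hs
  exact Finset.Subset.antisymm (key P Q hP hQ h) (key Q P hQ hP fun a b => (h a b).symm)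

lemma exists_fun {m c : ℕ} (P : Finset (Finset (Fin (m + 1)))) (hP : IsPart P)
    (hc : P.card = c + 1) :
    ∃ f : Fin (m + 1) → Fin (c + 1), f 0 = 0 ∧ Function.Surjective f ∧
      ∀ a b, f a = f b ↔ ∃ t ∈ P, a ∈ t ∧ b ∈ t := by
  choose g hg hgu using hP.2
  let e : P ≃ Fin (c + 1) := P.equivFinOfCardEq hc
  let f₀ : Fin (m + 1) → Fin (c + 1) := fun a => e ⟨g a, (hg a).1⟩
  let σ : Equiv.Perm (Fin (c + 1)) := Equiv.swap (f₀ 0) 0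
  refine ⟨fun a => σ (f₀ a), Equiv.swap_apply_left _ _, ?_, ?_⟩
  · refine σ.surjective.comp fun y => ?_
    obtain ⟨⟨t, ht⟩, rfl⟩ := e.surjective y
    obtain ⟨a, ha⟩ := hP.1 t ht
    refine ⟨a, congrArg e (Subtype.ext ?_)⟩
    exact (hgu a t ⟨ht, ha⟩).symm
  · intro a b
    rw [σ.injective.eq_iff, e.injective.eq_iff, Subtype.mk.injEq]
    constructor
    · intro h
      exact ⟨g a, (hg a).1, (hg a).2, h ▸ (hg b).2⟩
    · rintro ⟨t, ht, ha, hb⟩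
      rw [← hgu a t ⟨ht, ha⟩, ← hgu b t ⟨ht, hb⟩]

open Classical in
lemma exists_part {u : ℕ} (s : Setoid (Fin u)) :
    ∃ P : Finset (Finset (Fin u)), IsPart P ∧ ∀ a b, (∃ t ∈ P, a ∈ t ∧ b ∈ t) ↔ s a b := by
  refine ⟨Finset.univ.image fun a => Finset.univ.filter fun b => s a b, ⟨?_, ?_⟩, ?_⟩
  · intro t ht
    obtain ⟨a, -, rfl⟩ := Finset.mem_image.1 ht
    exact ⟨a, by simp⟩
  · intro a
    refine ⟨Finset.univ.filter fun b => s a b, ⟨Finset.mem_image_of_mem _ (Finset.mem_univ a),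
      by simp⟩, ?_⟩
    rintro t ⟨ht, ha⟩
    obtain ⟨b, -, rfl⟩ := Finset.mem_image.1 ht
    have hba : s b a := by simpa using ha
    ext d
    simp only [Finset.mem_filter, Finset.mem_univ, true_and]
    exact ⟨fun h => s.trans (s.symm hba) h, fun h => s.trans hba h⟩
  · intro a b
    constructor
    · rintro ⟨t, ht, ha, hb⟩
      obtain ⟨d, -, rfl⟩ := Finset.mem_image.1 ht
      have h1 : s d a := by simpa using ha
      have h2 : s d b := by simpa using hb
      exact s.trans (s.symm h1) h2
    · intro h
      exact ⟨_, Finset.mem_image_of_mem _ (Finset.mem_univ a), by simp,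
        by simpa using h⟩

/-- a full lattice determines the fibres of `f` -/
lemma fibre_iff {m c : ℕ} (f : Fin (m + 1) → Fin (c + 1)) (h0 : f 0 = 0)
    (L : Submodule ℤ (Fin c → ℤ)) (N : ℤ) (hN : N ≠ 0)
    (hL : ∀ x, N • x ∈ L) (a b : Fin (m + 1)) :
    f a = f b ↔ ∀ v ∈ L.map (iota f), hat v a = hat v b := by
  constructor
  · rintro h _ ⟨w, -, rfl⟩
    rw [hat_iota f h0, hat_iota f h0, h]
  · intro h
    have h' : ∀ x, hat x (f a) = hat x (f b) := by
      intro x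
      have := h _ (Submodule.mem_map_of_mem (hL x))
      rw [hat_iota f h0, hat_iota f h0, hat_smul, hat_smul] at this
      exact mul_left_cancel₀ hN this
    have h2 := h' (fun i => (i : ℤ) + 1)
    have h3 : ∀ p : Fin (c + 1), hat (fun i : Fin c => (i : ℤ) + 1) p = (p : ℤ) := by
      intro p
      refine Fin.cases ?_ (fun i => ?_) p
      · simp [hat_zero]
      · simp [hat_succ]
    rw [h3, h3] at h2
    exact Fin.ext (by exact_mod_cast h2)

theorem phiCorank_eq_stirling_mul_phi (n k r : ℕ) (hn : 1 ≤ n) (hr : 1 ≤ r) :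
    phiCorank (n + k) k r = stirlingSecond (n + k + 1) (n + 1) * phi n r := by
  unfold phiCorank stirlingSecond phi
  rw [← Nat.card_prod]
  symm
  have hfun := fun P : {S : Finset (Finset (Fin (n + k + 1))) //
    S.card = n + 1 ∧ (∀ t ∈ S, t.Nonempty) ∧ ∀ a, ∃! t, t ∈ S ∧ a ∈ t} =>
      exists_fun (m := n + k) (c := n) P.1 P.2.2 P.2.1
  choose F hF0 hFs hF using hfun
  have hidx : ∀ L : Submodule ℤ (Fin n → ℤ), L.toAddSubgroup.index = r →
      ∀ x, (r : ℤ) • x ∈ L := by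
    intro L hL x
    have := L.toAddSubgroup.nsmul_index_mem x
    rw [hL] at this
    rw [natCast_zsmul]
    exact this
  have hr0 : (r : ℤ) ≠ 0 := by exact_mod_cast (by omega : r ≠ 0)
  let Φ : ({S : Finset (Finset (Fin (n + k + 1))) //
      S.card = n + 1 ∧ (∀ t ∈ S, t.Nonempty) ∧ ∀ a, ∃! t, t ∈ S ∧ a ∈ t} ×
      {L : Submodule ℤ (Fin n → ℤ) //
        IsMulClosed L ∧ Module.finrank ℤ L = n ∧ L.toAddSubgroup.index = r}) →
      {L : Submodule ℤ (Fin (n + k) → ℤ) //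
        IsMulClosed L ∧ Module.finrank ℤ L = n + k - k ∧
        Nat.card (Submodule.torsion ℤ ((Fin (n + k) → ℤ) ⧸ L)) = r} := fun p =>
    ⟨p.2.1.map (iota (F p.1)), by
      refine ⟨?_, ?_, ?_⟩
      · rintro _ ⟨v, hv, rfl⟩ _ ⟨w, hw, rfl⟩
        exact ⟨v * w, p.2.2.1 v hv w hw, iota_mul _ _ _⟩
      · rw [finrank_map_iota _ (hF0 _) (hFs _), p.2.2.2.1]; omega
      · rw [card_torsion _ (hF0 _) (hFs _) p.2.1 r hr0 (hidx _ p.2.2.2.2), p.2.2.2.2]⟩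
  refine Nat.card_eq_of_bijective Φ ⟨?_, ?_⟩
  · rintro ⟨P, L⟩ ⟨P', L'⟩ h
    have h1 : L.1.map (iota (F P)) = L'.1.map (iota (F P')) := congrArg Subtype.val h
    have hP : P = P' := by
      apply Subtype.ext
      refine part_ext _ _ P.2.2 P'.2.2 fun a b => ?_
      rw [← hF, ← hF, fibre_iff _ (hF0 P) L.1 r hr0 (hidx _ L.2.2.2),
        fibre_iff _ (hF0 P') L'.1 r hr0 (hidx _ L'.2.2.2), h1]
    subst hP
    have hL : L = L' :=
      Subtype.ext (Submodule.map_injective_of_injective (iota_inj _ (hF0 P) (hFs P)) h1)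
    rw [hL]
  · rintro ⟨M, hMm, hMr, hMt⟩
    let s : Setoid (Fin (n + k + 1)) :=
      { r := fun a b => ∀ v ∈ M, hat v a = hat v b
        iseqv := ⟨fun _ _ _ => rfl, fun h v hv => (h v hv).symm,
          fun h h' v hv => (h v hv).trans (h' v hv)⟩ }
    obtain ⟨P, hP, hPs⟩ := exists_part s
    have hPs' : ∀ a b, (∃ t ∈ P, a ∈ t ∧ b ∈ t) ↔ ∀ v ∈ M, hat v a = hat v b := hPs
    have hfull : ∀ (c : ℕ) (f : Fin (n + k + 1) → Fin (c + 1)), f 0 = 0 →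
        Function.Surjective f → (∀ a b, f a = f b ↔ ∃ t ∈ P, a ∈ t ∧ b ∈ t) →
        ∃ L : Submodule ℤ (Fin c → ℤ), L.map (iota f) = M ∧ IsMulClosed L ∧
          ∃ N : ℤ, N ≠ 0 ∧ ∀ x : Fin c → ℤ, N • x ∈ L := by
      intro c f h0 hf hfP
      have hmap : (M.comap (iota f)).map (iota f) = M := by
        apply Submodule.map_comap_eq_of_le
        intro v hv
        exact mem_range_iota f h0 hf v fun a b hab => (hPs' a b).1 ((hfP a b).1 hab) v hv
      have hmul : IsMulClosed (M.comap (iota f)) := by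
        intro u hu v hv
        rw [Submodule.mem_comap, iota_mul]
        exact hMm _ hu _ hv
      refine ⟨_, hmap, hmul, exists_full _ hmul ?_⟩
      intro a b hab
      obtain ⟨a, rfl⟩ := hf a
      obtain ⟨b, rfl⟩ := hf b
      rw [Ne, hfP, hPs'] at hab
      push Not at hab
      obtain ⟨v, hv, hne⟩ := hab
      rw [← hmap] at hv
      obtain ⟨w, hw, rfl⟩ := hv
      rw [hat_iota f h0, hat_iota f h0] at hne
      exact ⟨w, hw, hne⟩
    have hcard : P.card = n + 1 := by
      have hpos : 0 < P.card := by
        obtain ⟨t, ht, -⟩ := hP.2 0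
        exact Finset.card_pos.2 ⟨t, ht.1⟩
      obtain ⟨c, hc⟩ := Nat.exists_eq_succ_of_ne_zero hpos.ne'
      obtain ⟨f, h0, hf, hfP⟩ := exists_fun P hP hc
      obtain ⟨L, hLM, -, N, hN, hL⟩ := hfull c f h0 hf hfP
      have := finrank_full L N hN hL
      rw [← finrank_map_iota f h0 hf L, hLM, hMr] at this
      omega
    let p : {S : Finset (Finset (Fin (n + k + 1))) //
      S.card = n + 1 ∧ (∀ t ∈ S, t.Nonempty) ∧ ∀ a, ∃! t, t ∈ S ∧ a ∈ t} := ⟨P, hcard, hP⟩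
    obtain ⟨L, hLM, hLm, N, hN, hL⟩ := hfull n (F p) (hF0 p) (hFs p) (hF p)
    refine ⟨⟨p, L, hLm, finrank_full L N hN hL, ?_⟩, Subtype.ext hLM⟩
    rw [← card_torsion _ (hF0 p) (hFs p) L N hN hL, hLM, hMt]
end

section
/- For any acceptable map g : ℤ^n → ℤ^{n+k} and any ℤ-submodule L of ℤ^n of full rank n, the cardinality of the torsion subgroup of the quotient group ℤ^{n+k} / g(L) equals the index [ℤ^n : L]. -/
/-- An acceptable map `ℤ^n → ℤ^{n+k}` is an injective map each of whose output
coordinates is either one of the input coordinates or identically `0`. -/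
def IsAcceptable {n k : ℕ} (g : (Fin n → ℤ) → (Fin (n + k) → ℤ)) : Prop :=
  Function.Injective g ∧
    ∀ j : Fin (n + k), (∃ i : Fin n, ∀ x, g x j = x i) ∨ ∀ x, g x j = 0

/-- For an acceptable map `g` and a full rank sublattice `L` of `ℤ^n`, the torsion
subgroup of `ℤ^{n+k}/g(L)` has cardinality equal to the index `[ℤ^n : L]`. -/
theorem torsion_card_eq_index (n k : ℕ) (g : (Fin n → ℤ) → (Fin (n + k) → ℤ))
    (hg : IsAcceptable g) (L : Submodule ℤ (Fin n → ℤ))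
    (hrank : Module.finrank ℤ L = n) :
    Nat.card (Submodule.torsion ℤ
        ((Fin (n + k) → ℤ) ⧸ Submodule.span ℤ (g '' (L : Set (Fin n → ℤ))))) =
      L.toAddSubgroup.index := by
  obtain ⟨hinj, hco⟩ := hg
  obtain ⟨f, rfl⟩ : ∃ f : (Fin n → ℤ) →ₗ[ℤ] (Fin (n + k) → ℤ), (f : _ → _) = g := by
    refine ⟨{ toFun := g, map_add' := ?_, map_smul' := ?_ }, rfl⟩
    · intro x y
      ext j
      rcases hco j with ⟨i, hi⟩ | h
      · simp [hi]
      · simp [h]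
    · intro c x
      ext j
      rcases hco j with ⟨i, hi⟩ | h
      · simp [hi]
      · simp [h]
  have hex : ∀ i : Fin n, ∃ j, ∀ x, f x j = x i := by
    intro i
    by_contra hne
    push Not at hne
    have h0 : f (Pi.single i 1) = f 0 := by
      ext j
      rcases hco j with ⟨i', hi⟩ | h
      · have hii : i' ≠ i := by
          rintro rfl
          obtain ⟨x, hx⟩ := hne j
          exact hx (hi x)
        rw [hi, hi]
        simp [hii]
      · rw [h, h]
    have h1 := congrFun (hinj h0) i
    simp at h1
  choose s hs using hex
  have hspan : Submodule.span ℤ (f '' (L : Set (Fin n → ℤ))) = L.map f := by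
    rw [Submodule.span_image, Submodule.span_eq]
  rw [hspan]
  have hfin : Finite ((Fin n → ℤ) ⧸ L) :=
    Submodule.finiteQuotientOfFreeOfRankEq L (by simpa using hrank)
  let φ := L.mapQ (L.map f) f (Submodule.le_comap_map f L)
  have hφ : Function.Injective φ := by
    rw [← LinearMap.ker_eq_bot, LinearMap.ker_eq_bot']
    intro q hq
    obtain ⟨x, rfl⟩ := Submodule.mkQ_surjective L q
    have h2 : f x ∈ L.map f := by
      rw [← Submodule.Quotient.mk_eq_zero]
      exact hq
    obtain ⟨y, hy, hxy⟩ := h2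
    rw [← hinj hxy]
    simpa using hy
  have hrange : LinearMap.range φ = Submodule.torsion ℤ ((Fin (n + k) → ℤ) ⧸ L.map f) := by
    ext q
    rw [Submodule.mem_torsion_iff]
    constructor
    · rintro ⟨p, rfl⟩
      refine ⟨⟨(Nat.card ((Fin n → ℤ) ⧸ L) : ℤ), ?_⟩, ?_⟩
      · rw [mem_nonZeroDivisors_iff_ne_zero]
        exact_mod_cast Nat.card_pos.ne'
      · change (Nat.card ((Fin n → ℤ) ⧸ L) : ℤ) • φ p = 0
        rw [← map_smul, natCast_zsmul, card_nsmul_eq_zero', map_zero]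
    · rintro ⟨⟨a, ha⟩, h⟩
      obtain ⟨y, rfl⟩ := Submodule.mkQ_surjective _ q
      rw [mem_nonZeroDivisors_iff_ne_zero] at ha
      have h2 : a • y ∈ L.map f := by
        rw [← Submodule.Quotient.mk_eq_zero]
        exact h
      obtain ⟨x, hx, hxy⟩ := h2
      refine ⟨Submodule.Quotient.mk (fun i => y (s i)), ?_⟩
      have hxe : x = a • (fun i => y (s i)) := by
        ext i
        rw [← hs i x, hxy]
        rfl
      have hy : f (fun i => y (s i)) = y := by
        apply smul_right_injective _ ha
        change a • f _ = a • y
        rw [← hxy, hxe, map_smul]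
      change Submodule.Quotient.mk (f _) = Submodule.Quotient.mk y
      rw [hy]
  rw [← hrange]
  exact (Nat.card_congr (LinearEquiv.ofInjective φ hφ).toEquiv).symm
end

section
/- There is a bijection between the set of ordered acceptable maps ℤ^n → ℤ^{n+k} and the set of partitions of {0, 1, …, n+k} into n+1 nonempty parts, given by sending an ordered acceptable map g to the partition {A_0^g, A_1^g, …, A_n^g}, where A_i^g (for 1 ≤ i ≤ n) is the set of output coordinates of g carrying x_i and A_0^g = {0,1,…,n+k} \ (A_1^g ∪ … ∪ A_n^g). -/
open Classical in
/-- `A_i^g`: the set of output coordinates of `g` carrying the input coordinate `x i`. -/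
noncomputable def coordSet {n k : ℕ} (g : (Fin n → ℤ) → (Fin (n + k) → ℤ))
    (i : Fin n) : Finset (Fin (n + k)) :=
  Finset.univ.filter fun j => ∀ x, g x j = x i

/-- An acceptable map `g` is ordered if `min A_i^g < min A_j^g` whenever `i < j`. -/
def IsOrdered {n k : ℕ} (g : (Fin n → ℤ) → (Fin (n + k) → ℤ)) : Prop :=
  ∀ i₁ i₂ : Fin n, i₁ < i₂ → (coordSet g i₁).min < (coordSet g i₂).min

/-- The collection `{A_0^g, A_1^g, …, A_n^g}` of subsets of `{0, 1, …, n+k}`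
(realized as `Fin (n+k+1)`, with the output coordinate `j ∈ {1,…,n+k}` of `g`
corresponding to `Fin.succ j`, and `A_0^g` the complement of `A_1^g ∪ ⋯ ∪ A_n^g`). -/
noncomputable def partsOf {n k : ℕ} (g : (Fin n → ℤ) → (Fin (n + k) → ℤ)) :
    Finset (Finset (Fin (n + k + 1))) :=
  insert
    (Finset.univ \ Finset.univ.biUnion fun i : Fin n => (coordSet g i).image Fin.succ)
    (Finset.univ.image fun i : Fin n => (coordSet g i).image Fin.succ)

theorem mem_coordSet {n k : ℕ} (g : (Fin n → ℤ) → (Fin (n + k) → ℤ)) (i : Fin n)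
    (j : Fin (n + k)) : j ∈ coordSet g i ↔ ∀ x, g x j = x i := by
  simp [coordSet]

theorem coordSet_unique {n k : ℕ} {g : (Fin n → ℤ) → (Fin (n + k) → ℤ)} {i i' : Fin n}
    {j : Fin (n + k)} (h : j ∈ coordSet g i) (h' : j ∈ coordSet g i') : i = i' := by
  rw [mem_coordSet] at h h'
  by_contra hne
  have h1 := h (Pi.single i 1)
  have h2 := h' (Pi.single i 1)
  rw [h1, Pi.single_eq_same, Pi.single_eq_of_ne (Ne.symm hne)] at h2
  exact one_ne_zero h2

theorem coordSet_nonempty {n k : ℕ} {g : (Fin n → ℤ) → (Fin (n + k) → ℤ)}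
    (hg : IsAcceptable g) (i : Fin n) : (coordSet g i).Nonempty := by
  by_contra hne
  rw [Finset.not_nonempty_iff_eq_empty] at hne
  have h : g (Pi.single i 1) = g 0 := by
    funext j
    rcases hg.2 j with ⟨i', hi'⟩ | h0
    · rw [hi', hi']
      have : i' ≠ i := by
        rintro rfl
        have := (mem_coordSet g i' j).2 hi'
        simp [hne] at this
      rw [Pi.single_eq_of_ne this]; rfl
    · rw [h0, h0]
  have := congrFun (hg.1 h) i
  simp at this

theorem image_coordSet_inj {n k : ℕ} {g : (Fin n → ℤ) → (Fin (n + k) → ℤ)}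
    (hg : IsAcceptable g) :
    Function.Injective (fun i : Fin n => (coordSet g i).image Fin.succ) := by
  intro i i' h
  have h := Finset.image_injective (Fin.succ_injective _) h
  obtain ⟨j, hj⟩ := coordSet_nonempty hg i
  exact coordSet_unique hj (h ▸ hj)

theorem zero_mem_first {n k : ℕ} (g : (Fin n → ℤ) → (Fin (n + k) → ℤ)) :
    (0 : Fin (n + k + 1)) ∈
    (Finset.univ \ Finset.univ.biUnion fun i : Fin n => (coordSet g i).image Fin.succ) := by
  simp [Fin.succ_ne_zero]

theorem mem_partsOf_not_zero {n k : ℕ} (g : (Fin n → ℤ) → (Fin (n + k) → ℤ))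
    (t : Finset (Fin (n + k + 1))) :
    (t ∈ partsOf g ∧ 0 ∉ t) ↔ ∃ i, (coordSet g i).image Fin.succ = t := by
  constructor
  · rintro ⟨h, h0⟩
    rw [partsOf, Finset.mem_insert] at h
    rcases h with rfl | h
    · exact absurd (zero_mem_first g) h0
    · simpa using h
  · rintro ⟨i, rfl⟩
    exact ⟨Finset.mem_insert_of_mem (Finset.mem_image_of_mem _ (Finset.mem_univ i)),
      by simp [Fin.succ_ne_zero]⟩

theorem mapsTo_aux {n k : ℕ} {g : (Fin n → ℤ) → (Fin (n + k) → ℤ)} (hg : IsAcceptable g) :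
    (partsOf g).card = n + 1 ∧ (∀ t ∈ partsOf g, t.Nonempty) ∧
      ∀ a, ∃! t, t ∈ partsOf g ∧ a ∈ t := by
  refine ⟨?_, ?_, ?_⟩
  · rw [partsOf, Finset.card_insert_of_notMem, Finset.card_image_of_injective _
      (image_coordSet_inj hg), Finset.card_univ, Fintype.card_fin]
    intro h
    obtain ⟨i, -, hi⟩ := Finset.mem_image.1 h
    have := zero_mem_first g
    rw [← hi] at this
    simp [Fin.succ_ne_zero] at this
  · intro t ht
    rw [partsOf, Finset.mem_insert] at ht
    rcases ht with rfl | ht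
    · exact ⟨0, zero_mem_first g⟩
    · obtain ⟨i, -, rfl⟩ := Finset.mem_image.1 ht
      exact (coordSet_nonempty hg i).image _
  · intro a
    by_cases ha : ∃ i, a ∈ (coordSet g i).image Fin.succ
    · obtain ⟨i, hi⟩ := ha
      refine ⟨_, ⟨((mem_partsOf_not_zero g _).2 ⟨i, rfl⟩).1, hi⟩, ?_⟩
      rintro t ⟨ht, hat⟩
      rw [partsOf, Finset.mem_insert] at ht
      rcases ht with rfl | ht
      · rw [Finset.mem_sdiff] at hat
        exact absurd (Finset.mem_biUnion.2 ⟨i, Finset.mem_univ i, hi⟩) hat.2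
      · obtain ⟨i', -, rfl⟩ := Finset.mem_image.1 ht
        obtain ⟨j, hj, rfl⟩ := Finset.mem_image.1 hi
        obtain ⟨j', hj', e⟩ := Finset.mem_image.1 hat
        obtain rfl := Fin.succ_injective _ e
        rw [coordSet_unique hj hj']
    · refine ⟨_, ⟨Finset.mem_insert_self _ _, ?_⟩, ?_⟩
      · rw [Finset.mem_sdiff]
        refine ⟨Finset.mem_univ _, fun h => ha ?_⟩
        obtain ⟨i, -, hi⟩ := Finset.mem_biUnion.1 h
        exact ⟨i, hi⟩
      · rintro t ⟨ht, hat⟩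
        rw [partsOf, Finset.mem_insert] at ht
        rcases ht with rfl | ht
        · rfl
        · obtain ⟨i', -, rfl⟩ := Finset.mem_image.1 ht
          exact absurd ⟨i', hat⟩ ha

theorem exists_coordSet_eq {n k : ℕ} {g h : (Fin n → ℤ) → (Fin (n + k) → ℤ)}
    (e : partsOf g = partsOf h) (i : Fin n) : ∃ i', coordSet h i' = coordSet g i := by
  have h1 := (mem_partsOf_not_zero g _).2 ⟨i, rfl⟩
  rw [e] at h1
  obtain ⟨i', hi'⟩ := (mem_partsOf_not_zero h _).1 h1
  exact ⟨i', Finset.image_injective (Fin.succ_injective _) hi'⟩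

theorem injOn_aux {n k : ℕ} {g h : (Fin n → ℤ) → (Fin (n + k) → ℤ)}
    (hg : IsAcceptable g) (og : IsOrdered g) (hh : IsAcceptable h) (oh : IsOrdered h)
    (e : partsOf g = partsOf h) : g = h := by
  have sg : StrictMono (fun i => (coordSet g i).min) := fun i j hij => og i j hij
  have sh : StrictMono (fun i => (coordSet h i).min) := fun i j hij => oh i j hij
  have hr : Set.range (fun i => (coordSet g i).min) = Set.range (fun i => (coordSet h i).min) := by
    apply Set.Subset.antisymm
    · rintro _ ⟨i, rfl⟩
      obtain ⟨i', hi'⟩ := exists_coordSet_eq e i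
      exact ⟨i', by simp only [hi']⟩
    · rintro _ ⟨i, rfl⟩
      obtain ⟨i', hi'⟩ := exists_coordSet_eq e.symm i
      exact ⟨i', by simp only [hi']⟩
  have hf := (StrictMono.range_inj sg sh).1 hr
  have hc : ∀ i, coordSet g i = coordSet h i := by
    intro i
    obtain ⟨i', hi'⟩ := exists_coordSet_eq e i
    have h1 : (coordSet g i).min = (coordSet h i).min := congrFun hf i
    rw [← hi'] at h1
    have := sh.injective h1
    rw [← hi', this]
  funext x j
  rcases hg.2 j with ⟨i, hi⟩ | h0
  · have := (mem_coordSet g i j).2 hi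
    rw [hc, mem_coordSet] at this
    rw [hi, this]
  · rcases hh.2 j with ⟨i, hi⟩ | h0'
    · have := (mem_coordSet h i j).2 hi
      rw [← hc, mem_coordSet] at this
      rw [hi, this]
    · rw [h0, h0']

theorem surj_aux {n k : ℕ} (S : Finset (Finset (Fin (n + k + 1))))
    (hc : S.card = n + 1) (hne : ∀ t ∈ S, t.Nonempty) (hu : ∀ a, ∃! t, t ∈ S ∧ a ∈ t) :
    ∃ g : (Fin n → ℤ) → (Fin (n + k) → ℤ), (IsAcceptable g ∧ IsOrdered g) ∧ partsOf g = S := by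
  classical
  have huniq : ∀ {a t t'}, t ∈ S → t' ∈ S → a ∈ t → a ∈ t' → t = t' :=
    fun {a t t'} h1 h2 h3 h4 => (hu a).unique ⟨h1, h3⟩ ⟨h2, h4⟩
  obtain ⟨c, ⟨hcS, hc0⟩, -⟩ := hu 0
  have hTc : (S.erase c).card = n := by rw [Finset.card_erase_of_mem hcS, hc]; rfl
  have hT0 : ∀ t ∈ S.erase c, (0 : Fin (n + k + 1)) ∉ t := by
    intro t ht h0
    exact (Finset.mem_erase.1 ht).1 (huniq (Finset.mem_erase.1 ht).2 hcS h0 hc0)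
  let p : Finset (Fin (n + k + 1)) → Finset (Fin (n + k)) :=
    fun t => Finset.univ.filter fun j => j.succ ∈ t
  have hp : ∀ t j, j ∈ p t ↔ j.succ ∈ t := by intro t j; simp [p]
  have hpim : ∀ t ∈ S.erase c, (p t).image Fin.succ = t := by
    intro t ht
    ext a
    rw [Finset.mem_image]
    constructor
    · rintro ⟨j, hj, rfl⟩
      exact (hp t j).1 hj
    · intro ha
      have : a ≠ 0 := by rintro rfl; exact hT0 t ht ha
      obtain ⟨j, rfl⟩ := Fin.exists_succ_eq.2 this
      exact ⟨j, (hp t j).2 ha, rfl⟩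
  have hpne : ∀ t ∈ S.erase c, (p t).Nonempty := by
    intro t ht
    rw [← Finset.image_nonempty (f := Fin.succ), hpim t ht]
    exact hne t (Finset.mem_of_mem_erase ht)
  have hinj : Set.InjOn (fun t => (p t).min) (S.erase c : Finset _) := by
    intro t ht t' ht' h
    obtain ⟨m, hm⟩ := Finset.min_of_nonempty (hpne t ht)
    have hm' : (p t').min = m := by rw [← hm]; exact h.symm
    exact huniq (Finset.mem_of_mem_erase ht) (Finset.mem_of_mem_erase ht')
      ((hp _ _).1 (Finset.mem_of_min hm)) ((hp _ _).1 (Finset.mem_of_min hm'))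
  have hM : ((S.erase c).image (fun t => (p t).min)).card = n := by
    rw [Finset.card_image_of_injOn hinj, hTc]
  let o := ((S.erase c).image (fun t => (p t).min)).orderEmbOfFin hM
  have ho : ∀ i, ∃ t ∈ S.erase c, (p t).min = o i := by
    intro i
    exact Finset.mem_image.1 (Finset.orderEmbOfFin_mem _ hM i)
  choose T hTS hTo using ho
  have hTsurj : ∀ t ∈ S.erase c, ∃ i, T i = t := by
    intro t ht
    have h1 : (p t).min ∈ Set.range o := by
      rw [Finset.range_orderEmbOfFin]
      exact Finset.mem_coe.2 (Finset.mem_image_of_mem (fun t => (p t).min) ht)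
    obtain ⟨i, hi⟩ := h1
    exact ⟨i, hinj (hTS i) ht ((hTo i).trans hi)⟩
  have hTinj : ∀ {a i i'}, a ∈ T i → a ∈ T i' → i = i' := by
    intro a i i' h h'
    have := huniq (Finset.mem_of_mem_erase (hTS i)) (Finset.mem_of_mem_erase (hTS i')) h h'
    apply o.injective
    rw [← hTo, ← hTo, this]
  let g : (Fin n → ℤ) → (Fin (n + k) → ℤ) := fun x j =>
    if h : ∃ i, j.succ ∈ T i then x h.choose else 0
  have hg1 : ∀ {i j}, j.succ ∈ T i → ∀ x, g x j = x i := by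
    intro i j h x
    have hex : ∃ i, j.succ ∈ T i := ⟨i, h⟩
    have : hex.choose = i := hTinj hex.choose_spec h
    simp only [g, dif_pos hex, this]
  have hg0 : ∀ {j}, (¬ ∃ i, j.succ ∈ T i) → ∀ x, g x j = 0 := by
    intro j h x
    simp only [g, dif_neg h]
  have hcs : ∀ i, coordSet g i = p (T i) := by
    intro i
    ext j
    rw [hp]
    constructor
    · intro h
      by_cases hex : ∃ i', j.succ ∈ T i'
      · obtain ⟨i', hi'⟩ := hex
        rw [coordSet_unique h ((mem_coordSet g i' j).2 (hg1 hi'))]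
        exact hi'
      · have h1 := (mem_coordSet g i j).1 h (fun _ => 1)
        exact absurd ((hg0 hex (fun _ => 1)).symm.trans h1) zero_ne_one
    · intro h
      exact (mem_coordSet g i j).2 (hg1 h)
  refine ⟨g, ⟨⟨?_, ?_⟩, ?_⟩, ?_⟩
  · intro x y hxy
    funext i
    obtain ⟨j, hj⟩ := hpne _ (hTS i)
    have hj := (hp _ _).1 hj
    rw [← hg1 hj x, ← hg1 hj y, hxy]
  · intro j
    by_cases hex : ∃ i, j.succ ∈ T i
    · obtain ⟨i, hi⟩ := hex
      exact Or.inl ⟨i, hg1 hi⟩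
    · exact Or.inr (hg0 hex)
  · intro i i' h
    rw [hcs, hcs, hTo, hTo]
    exact o.strictMono h
  · have him : ∀ i, (coordSet g i).image Fin.succ = T i := by
      intro i
      rw [hcs, hpim _ (hTS i)]
    have h1 : (Finset.univ.image fun i : Fin n => (coordSet g i).image Fin.succ) = S.erase c := by
      ext t
      simp only [him, Finset.mem_image, Finset.mem_univ, true_and]
      constructor
      · rintro ⟨i, rfl⟩
        exact hTS i
      · exact hTsurj t
    have h2 : (Finset.univ \ Finset.univ.biUnion fun i : Fin n =>
        (coordSet g i).image Fin.succ) = c := by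
      ext a
      simp only [him, Finset.mem_sdiff, Finset.mem_univ, true_and, Finset.mem_biUnion]
      constructor
      · intro ha
        obtain ⟨t, ⟨htS, hat⟩, -⟩ := hu a
        by_contra hac
        have : t ≠ c := by rintro rfl; exact hac hat
        obtain ⟨i, rfl⟩ := hTsurj t (Finset.mem_erase.2 ⟨this, htS⟩)
        exact ha ⟨i, hat⟩
      · rintro ha ⟨i, hi⟩
        have := Finset.mem_erase.1 (hTS i)
        exact this.1 (huniq this.2 hcS hi ha)
    rw [partsOf, h1, h2, Finset.insert_erase hcS]

/-- The map `g ↦ {A_0^g, …, A_n^g}` is a bijection between ordered acceptable maps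
`ℤ^n → ℤ^{n+k}` and partitions of `{0, 1, …, n+k}` into `n+1` nonempty parts. -/
theorem ordered_acceptable_biject_partitions (n k : ℕ) :
    Set.BijOn (fun g : (Fin n → ℤ) → (Fin (n + k) → ℤ) => partsOf g)
      {g | IsAcceptable g ∧ IsOrdered g}
      {S : Finset (Finset (Fin (n + k + 1))) |
        S.card = n + 1 ∧ (∀ t ∈ S, t.Nonempty) ∧ ∀ a, ∃! t, t ∈ S ∧ a ∈ t} := by
  refine ⟨?_, ?_, ?_⟩
  · rintro g ⟨hg, -⟩
    exact mapsTo_aux hg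
  · rintro g ⟨hg, og⟩ h ⟨hh, oh⟩ e
    exact injOn_aux hg og hh oh e
  · rintro S ⟨hc, hne, hu⟩
    exact surj_aux S hc hne hu
end

section
/- The number of equivalence classes of acceptable maps ℤ^n → ℤ^{n+k}, under the equivalence g₁ ∼ g₂ iff g₁ = g₂ ∘ τ for some permutation τ of the n coordinates, is equal to the Stirling number of the second kind S(n+k+1, n+1), i.e., the number of partitions of a set with n+k+1 elements into n+1 nonempty subsets. -/
/-- The coordinate function attached to a label: `none` is the zero function. -/
def accP {n : ℕ} (o : Option (Fin n)) (x : Fin n → ℤ) : ℤ := o.elim 0 x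

theorem accP_inj {n : ℕ} {o o' : Option (Fin n)} (h : ∀ x, accP o x = accP o' x) : o = o' := by
  have h1 : ∀ o o' : Option (Fin n), (∀ x, accP o x = accP o' x) → ∀ i, o = some i → o' = some i := by
    intro o o' h i hi
    subst hi
    have := h (Pi.single i 1)
    rcases o' with _ | j
    · simp [accP] at this
    · by_cases hij : j = i
      · rw [hij]
      · simp [accP, hij] at this
  rcases o with _ | i
  · rcases o' with _ | j
    · rfl
    · exact (h1 _ _ (fun x => (h x).symm) j rfl)
  · exact (h1 _ _ h i rfl).symm

def accGood {n k : ℕ} (f : Fin (n + k + 1) → Option (Fin n)) : Prop :=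
  Function.Surjective f ∧ f 0 = none

theorem acc_exists {n k : ℕ} {g : (Fin n → ℤ) → (Fin (n + k) → ℤ)} (hg : IsAcceptable g) :
    ∃ f : Fin (n + k + 1) → Option (Fin n), accGood f ∧ ∀ x j, g x j = accP (f j.succ) x := by
  have h : ∀ j, ∃ o : Option (Fin n), ∀ x, g x j = accP o x := by
    intro j
    rcases hg.2 j with ⟨i, hi⟩ | h0
    · exact ⟨some i, hi⟩
    · exact ⟨none, h0⟩
  choose o ho using h
  refine ⟨Fin.cons none o, ⟨?_, rfl⟩, fun x j => by simpa using ho j x⟩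
  rintro (_ | i)
  · exact ⟨0, rfl⟩
  · by_contra hcon
    push Not at hcon
    have hne : ∀ j, o j ≠ some i := fun j => by simpa using hcon j.succ
    have : g (Pi.single i 1) = g 0 := by
      ext j
      rw [ho, ho]
      rcases hj : o j with _ | l
      · rfl
      · have : l ≠ i := by
          rintro rfl
          exact hne j hj
        simp [accP, this]
    have := congrFun (hg.1 this) i
    simp at this

theorem acc_of_good {n k : ℕ} {f : Fin (n + k + 1) → Option (Fin n)} (hf : accGood f) :
    IsAcceptable (n := n) (k := k) fun x j => accP (f j.succ) x := by
  constructor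
  · intro x y hxy
    ext i
    obtain ⟨a, ha⟩ := hf.1 (some i)
    rcases Fin.eq_zero_or_eq_succ a with h0 | ⟨j, rfl⟩
    · rw [h0, hf.2] at ha
      cases ha
    · have := congrFun hxy j
      simpa [ha, accP] using this
  · intro j
    rcases h : f j.succ with _ | i
    · right
      intro x
      simp [h, accP]
    · left
      exact ⟨i, fun x => by simp [h, accP]⟩

def accPart {n u : ℕ} (f : Fin u → Option (Fin n)) : Finset (Finset (Fin u)) :=
  Finset.univ.image fun a => Finset.univ.filter fun b => f b = f a

theorem accPart_spec {n u : ℕ} (f : Fin u → Option (Fin n)) (hf : Function.Surjective f) :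
    (accPart f).card = n + 1 ∧ (∀ t ∈ accPart f, t.Nonempty) ∧
      ∀ a, ∃! t, t ∈ accPart f ∧ a ∈ t := by
  refine ⟨?_, ?_, ?_⟩
  · have : accPart f = (Finset.univ : Finset (Option (Fin n))).image
        fun o => Finset.univ.filter fun b => f b = o := by
      ext t
      simp only [accPart, Finset.mem_image, Finset.mem_univ, true_and]
      exact (hf.exists (p := fun o => (Finset.univ.filter fun b => f b = o) = t)).symm
    rw [this, Finset.card_image_of_injective]
    · simp
    · intro o o' h
      obtain ⟨a, rfl⟩ := hf o
      have : a ∈ Finset.univ.filter fun b => f b = f a := by simp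
      simp only at h
      rw [h] at this
      simpa using this
  · intro t ht
    simp only [accPart, Finset.mem_image, Finset.mem_univ, true_and] at ht
    obtain ⟨a, rfl⟩ := ht
    exact ⟨a, by simp⟩
  · intro a
    refine ⟨Finset.univ.filter fun b => f b = f a, ⟨by simp [accPart], by simp⟩, ?_⟩
    rintro t ⟨ht, hat⟩
    simp only [accPart, Finset.mem_image, Finset.mem_univ, true_and] at ht
    obtain ⟨c, rfl⟩ := ht
    simp only [Finset.mem_filter, Finset.mem_univ, true_and] at hat
    rw [hat]

theorem accPart_ker {n u : ℕ} {f f' : Fin u → Option (Fin n)} (h : accPart f = accPart f')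
    (a b : Fin u) (hab : f b = f a) : f' b = f' a := by
  have h1 : (Finset.univ.filter fun b => f b = f a) ∈ accPart f := by simp [accPart]
  rw [h] at h1
  simp only [accPart, Finset.mem_image, Finset.mem_univ, true_and] at h1
  obtain ⟨c, hc⟩ := h1
  have ha : a ∈ Finset.univ.filter fun b => f' b = f' c := by rw [hc]; simp
  have hb : b ∈ Finset.univ.filter fun b => f' b = f' c := by rw [hc]; simpa using hab
  simp only [Finset.mem_filter, Finset.mem_univ, true_and] at ha hb
  rw [ha, hb]

theorem accPart_congr {n u : ℕ} {f f' : Fin u → Option (Fin n)}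
    (h : ∀ a b, f b = f a ↔ f' b = f' a) : accPart f = accPart f' := by
  simp only [accPart, h]

theorem acc_surj {n u : ℕ} (S : Finset (Finset (Fin (u + 1)))) (h1 : S.card = n + 1)
    (h2 : ∀ t ∈ S, t.Nonempty) (h3 : ∀ a, ∃! t, t ∈ S ∧ a ∈ t) :
    ∃ f : Fin (u + 1) → Option (Fin n), (Function.Surjective f ∧ f 0 = none) ∧ accPart f = S := by
  choose p hp hu using h3
  have e0 : S ≃ Option (Fin n) := Fintype.equivOfCardEq (by simp [h1])
  let q : Fin (u + 1) → S := fun a => ⟨p a, (hp a).1⟩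
  let e : S ≃ Option (Fin n) := e0.trans (Equiv.swap (e0 (q 0)) none)
  have hq : ∀ a, ∀ t ∈ S, a ∈ t → p a = t := fun a t ht hat => (hu a t ⟨ht, hat⟩).symm
  have hfil : ∀ a, (Finset.univ.filter fun b => e (q b) = e (q a)) = p a := by
    intro a
    ext b
    simp only [Finset.mem_filter, Finset.mem_univ, true_and, EmbeddingLike.apply_eq_iff_eq,
      q, Subtype.mk.injEq]
    constructor
    · intro h
      rw [← h]
      exact (hp b).2
    · intro h
      exact hq b _ (hp a).1 h
  refine ⟨fun a => e (q a), ⟨?_, ?_⟩, ?_⟩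
  · refine e.surjective.comp ?_
    rintro ⟨t, ht⟩
    obtain ⟨a, ha⟩ := h2 t ht
    exact ⟨a, Subtype.ext (hq a t ht ha)⟩
  · simp [e]
  · simp only [accPart, hfil]
    ext t
    simp only [Finset.mem_image, Finset.mem_univ, true_and]
    constructor
    · rintro ⟨a, rfl⟩
      exact (hp a).1
    · intro ht
      obtain ⟨a, ha⟩ := h2 t ht
      exact ⟨a, hq a t ht ha⟩

theorem acc_perm {n u : ℕ} {f f' : Fin (u + 1) → Option (Fin n)} (hf : Function.Surjective f)
    (h0 : f 0 = none) (h0' : f' 0 = none)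
    (h : ∀ a b, f b = f a ↔ f' b = f' a) :
    ∃ σ : Equiv.Perm (Fin n), ∀ a, f' a = (f a).map σ := by
  have hs : ∀ i : Fin n, ∃ a, f a = some i := fun i => hf (some i)
  choose s hs using hs
  have ht : ∀ i, ∃ l, f' (s i) = some l := by
    intro i
    rw [← Option.ne_none_iff_exists']
    rw [← h0', Ne, ← h, hs, h0]
    simp
  choose t ht using ht
  have hinj : Function.Injective t := by
    intro i l hil
    have : f' (s i) = f' (s l) := by rw [ht, ht, hil]
    rw [← h, hs, hs] at this
    exact Option.some.inj this
  refine ⟨Equiv.ofBijective t (Finite.injective_iff_bijective.1 hinj), fun a => ?_⟩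
  rcases ha : f a with _ | i
  · have : f' a = f' 0 := by rw [← h, ha, h0]
    rw [this, h0']
    rfl
  · have : f' a = f' (s i) := by rw [← h, ha, hs]
    rw [this, ht]
    rfl

theorem accP_map {n : ℕ} (o : Option (Fin n)) (σ : Equiv.Perm (Fin n)) (x : Fin n → ℤ) :
    accP (o.map σ) x = accP o (fun i => x (σ i)) := by
  cases o <;> rfl


/-- The number of equivalence classes of acceptable maps `ℤ^n → ℤ^{n+k}` under
precomposition with coordinate permutations is the Stirling number `S(n+k+1, n+1)`. -/
theorem card_acceptable_classes (n k : ℕ) :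
    Nat.card (Quot fun g₁ g₂ : {g : (Fin n → ℤ) → (Fin (n + k) → ℤ) // IsAcceptable g} =>
        ∃ τ : Equiv.Perm (Fin n), g₁.1 = g₂.1 ∘ fun x : Fin n → ℤ => fun i => x (τ i)) =
      stirlingSecond (n + k + 1) (n + 1) := by

  classical
  choose F hF hFg using fun g : {g : (Fin n → ℤ) → (Fin (n + k) → ℤ) // IsAcceptable g} =>
    acc_exists g.2
  unfold stirlingSecond
  refine Nat.card_congr (Equiv.ofBijective (Quot.lift
    (fun g => ⟨accPart (F g), accPart_spec _ (hF g).1⟩) ?_) ⟨?_, ?_⟩)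
  · rintro g₁ g₂ ⟨τ, hτ⟩
    have key : ∀ a, F g₁ a = (F g₂ a).map τ := by
      intro a
      rcases Fin.eq_zero_or_eq_succ a with rfl | ⟨j, rfl⟩
      · rw [(hF g₁).2, (hF g₂).2]
        rfl
      · apply accP_inj
        intro x
        rw [accP_map, ← hFg, ← hFg, hτ]
        rfl
    apply Subtype.ext
    apply accPart_congr
    intro a b
    rw [key, key]
    exact (Option.map_injective τ.injective).eq_iff
  · rintro ⟨g₁⟩ ⟨g₂⟩ h
    have h' : accPart (F g₁) = accPart (F g₂) := congrArg Subtype.val h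
    obtain ⟨σ, hσ⟩ := acc_perm (hF g₂).1 (hF g₂).2 (hF g₁).2
      (fun a b => ⟨accPart_ker h'.symm a b, accPart_ker h' a b⟩)
    apply Quot.sound
    refine ⟨σ, ?_⟩
    funext x j
    rw [hFg, hσ, accP_map, ← hFg]
    rfl
  · rintro ⟨S, h1, h2, h3⟩
    obtain ⟨f, hf, hS⟩ := acc_surj S h1 h2 h3
    refine ⟨Quot.mk _ ⟨_, acc_of_good hf⟩, ?_⟩
    apply Subtype.ext
    refine Eq.trans ?_ hS
    change accPart (F ⟨_, acc_of_good hf⟩) = accPart f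
    congr 1
    funext a
    rcases Fin.eq_zero_or_eq_succ a with rfl | ⟨j, rfl⟩
    · rw [(hF _).2, hf.2]
    · apply accP_inj
      intro x
      rw [← hFg]
end
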